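/- arXiv:1302.3024 — 2 statements merged into one kernel-verified Lean document; each statement's English description precedes it below -/
import Mathlib

section
/- Let α be an almost periodic minimal homeomorphism of an infinite compact metric space Θ, and let f : Θ × I → Θ × I be an α-forced increasing interval map admitting an f-invariant curve Γ = {(θ, γ(θ)) : θ ∈ Θ} with γ : Θ → int I continuous. Then there exists a topological extension f̂ : Θ × I → Θ × I of f with factor map h from f̂ to f of the form h(θ,x) = (θ, h_θ(x)) such that: (i) f̂ is an α-forced increasing interval map; (ii) all fibre maps h_θ are non-decreasing; (iii) h is injective on the complement of h^{-1}(Γ); (iv) for a countable set of points of Γ the h-preimage is a non-degenerate vertical segment, and for all other points of Γ it is a singleton; (v) h^{-1}(Γ) contains no graph of a continuous curve η : Θ → I; (vi) h^{-1}(Γ) is pinched and contains an almost automorphic minimal set of f̂ which is not almost periodic. -/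
open Set Function MeasureTheory

noncomputable section

/-- The circle `T¹ = ℝ/ℤ`. -/
abbrev T1 := AddCircle (1 : ℝ)

/-- The `n`-th iterate (`n ∈ ℤ`) of a bijection. -/
def zIter {X : Type*} (g : Equiv.Perm X) (n : ℤ) : X → X := fun x => (g ^ n) x

/-- A set of integers is syndetic if it has bounded gaps. -/
def ZSyndetic (S : Set ℤ) : Prop := ∃ N : ℕ, ∀ n : ℤ, ∃ k ∈ S, |k - n| ≤ (N : ℤ)

/-- A homeomorphism `α` of a metric space is almost periodic if for every `ε > 0` the set
`{n ∈ ℤ | dist(αⁿ, Id) < ε}` is syndetic. -/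
def AlmostPeriodicHomeo {Θ : Type*} [MetricSpace Θ] (α : Θ ≃ₜ Θ) : Prop :=
  ∀ ε > (0 : ℝ), ZSyndetic {n : ℤ | ∀ θ : Θ, dist (zIter α.toEquiv n θ) θ < ε}

/-- A homeomorphism is minimal if every (two-sided) orbit is dense. -/
def MinimalHomeo {Θ : Type*} [TopologicalSpace Θ] (α : Θ ≃ₜ Θ) : Prop :=
  ∀ θ : Θ, Dense (range fun n : ℤ => zIter α.toEquiv n θ)

/-- A self-map `g` of a metric space is almost periodic if its family of iterates
is (uniformly) equicontinuous. -/
def AlmostPeriodicMap {Y : Type*} [MetricSpace Y] (g : Y → Y) : Prop :=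
  ∀ ε > (0 : ℝ), ∃ δ > (0 : ℝ), ∀ y y' : Y, dist y y' < δ → ∀ n : ℕ, dist (g^[n] y) (g^[n] y') < ε

/-- `h` is a factor map (semiconjugacy) from `(X, f)` onto `(Y, g)`:
a continuous surjection with `h ∘ f = g ∘ h`.  Then `(X, f)` is a topological
extension of `(Y, g)`. -/
def IsFactorMap {X Y : Type*} [TopologicalSpace X] [TopologicalSpace Y]
    (f : X → X) (g : Y → Y) (h : X → Y) : Prop :=
  Continuous h ∧ Surjective h ∧ h ∘ f = g ∘ h

/-- A map `h` is almost 1-1 if the set of points of the target having exactly one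
preimage is dense. -/
def AlmostOneOne {X Y : Type*} [TopologicalSpace Y] (h : X → Y) : Prop :=
  Dense {y : Y | ∃! x, h x = y}

/-- A witness that the system `(X, f)` is almost automorphic: an almost periodic
homeomorphism of a compact metric space which is an almost 1-1 factor of `(X, f)`. -/
structure AAWitness {X : Type*} [TopologicalSpace X] (f : X → X) where
  (Y : Type)
  [mY : MetricSpace Y]
  [cY : CompactSpace Y]
  (g : Y ≃ₜ Y)
  (hmap : X → Y)
  (factor : IsFactorMap f (⇑g) hmap)
  (a11 : AlmostOneOne hmap)
  (ap : ∀ ε > (0 : ℝ), ∃ δ > (0 : ℝ), ∀ y y' : Y, dist y y' < δ →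
        ∀ n : ℤ, dist (zIter g.toEquiv n y) (zIter g.toEquiv n y') < ε)

/-- `M` is a minimal set of `f`: nonempty, closed, invariant, and without proper
nonempty closed invariant subsets. -/
def IsMinimalSet {X : Type*} [TopologicalSpace X] (f : X → X) (M : Set X) : Prop :=
  M.Nonempty ∧ IsClosed M ∧ f '' M = M ∧
    ∀ M' ⊆ M, M'.Nonempty → IsClosed M' → f '' M' ⊆ M' → M' = M

/-- The restriction of `f` to an invariant set. -/
def restrictMap {X : Type*} {f : X → X} {M : Set X} (hM : Set.MapsTo f M M) : ↥M → ↥M :=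
  Set.MapsTo.restrict f M M hM

/-- `M` is an almost automorphic minimal set of `f`: `f` restricted to `M` admits an
almost periodic almost 1-1 factor. -/
def IsAAMinimal {X : Type*} [MetricSpace X] (f : X → X) (M : Set X) : Prop :=
  IsMinimalSet f M ∧ ∀ hM : Set.MapsTo f M M, Nonempty (AAWitness (restrictMap hM))

/-- `M` is an almost periodic minimal set of `f`: the family of iterates of the
restriction of `f` to `M` is equicontinuous. -/
def IsAPMinimal {X : Type*} [MetricSpace X] (f : X → X) (M : Set X) : Prop :=
  IsMinimalSet f M ∧ ∀ hM : Set.MapsTo f M M, AlmostPeriodicMap (restrictMap hM)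

/-- A subset of a product is pinched if some fibre is a singleton. -/
def Pinched {Θ X : Type*} (A : Set (Θ × X)) : Prop := ∃ θ : Θ, ∃! x : X, (θ, x) ∈ A

/-- An `α`-forced increasing interval map on `Θ × I`: a continuous skew product over `α`
whose fibre maps are strictly increasing. -/
def ForcedIncreasing {Θ : Type*} [TopologicalSpace Θ] {I : Set ℝ} (α : Θ → Θ)
    (f : Θ × ↥I → Θ × ↥I) : Prop :=
  Continuous f ∧ (∀ p : Θ × ↥I, (f p).1 = α p.1) ∧
    ∀ θ : Θ, StrictMono fun x : ↥I => (f (θ, x)).2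

/-- The fibre of `M ⊆ Θ × I` over `θ`, as a set of reals. -/
def fiberSet {Θ : Type*} {I : Set ℝ} (M : Set (Θ × ↥I)) (θ : Θ) : Set ℝ :=
  (fun x : ↥I => (x : ℝ)) '' {x : ↥I | (θ, x) ∈ M}

/-- The filled-in envelope `[φ⁻_M, φ⁺_M]` of `M`, where `φ⁻_M(θ) = inf M_θ` and
`φ⁺_M(θ) = sup M_θ`. -/
def FilledEnvelope {Θ : Type*} {I : Set ℝ} (M : Set (Θ × ↥I)) : Set (Θ × ↥I) :=
  {p : Θ × ↥I | sInf (fiberSet M p.1) ≤ (p.2 : ℝ) ∧ (p.2 : ℝ) ≤ sSup (fiberSet M p.1)}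

/-- The graph of a curve `γ : Θ → I`. -/
def curveGraph {Θ : Type*} {I : Set ℝ} (γ : Θ → ↥I) : Set (Θ × ↥I) :=
  {p : Θ × ↥I | p.2 = γ p.1}

/-- The conclusion of the blow-up construction (properties (i)-(v) of the main theorem):
`f̂` is a topological extension of `f` via the fibre-respecting factor map `h`, `f̂` is an
`α`-forced increasing interval map, the fibre maps of `h` are non-decreasing, `h` is
injective off `h⁻¹(Γ)`, countably many points of `Γ` have non-degenerate vertical-segment
preimages while all other points of `Γ` have singleton preimages, and `h⁻¹(Γ)` contains
the graph of no continuous curve. -/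
def BlowUpConclusion {Θ : Type*} [TopologicalSpace Θ] {I : Set ℝ}
    (α : Θ → Θ) (f : Θ × ↥I → Θ × ↥I) (γ : Θ → ↥I)
    (fhat : Θ × ↥I → Θ × ↥I) (h : Θ × ↥I → Θ × ↥I) : Prop :=
  IsFactorMap fhat f h ∧ (∀ p : Θ × ↥I, (h p).1 = p.1) ∧
  ForcedIncreasing α fhat ∧
  (∀ θ : Θ, Monotone fun x : ↥I => (h (θ, x)).2) ∧
  Set.InjOn h (h ⁻¹' curveGraph γ)ᶜ ∧
  (∃ C : Set (Θ × ↥I), C ⊆ curveGraph γ ∧ C.Countable ∧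
    (∀ p ∈ C, ∃ x₁ x₂ : ↥I, x₁ < x₂ ∧ h ⁻¹' {p} = {p.1} ×ˢ Set.Icc x₁ x₂) ∧
    (∀ p ∈ curveGraph γ \ C, ∃ x : ↥I, h ⁻¹' {p} = {(p.1, x)})) ∧
  (∀ η : Θ → ↥I, Continuous η → ¬ (curveGraph η ⊆ h ⁻¹' curveGraph γ))


open Filter Topology

lemma zIter_add {X : Type*} (g : Equiv.Perm X) (m n : ℤ) (x : X) :
    zIter g (m + n) x = zIter g m (zIter g n x) := by
  simp [zIter, zpow_add]

lemma zIter_zero {X : Type*} (g : Equiv.Perm X) (x : X) : zIter g 0 x = x := by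
  simp [zIter]

lemma zIter_one {X : Type*} (g : Equiv.Perm X) (x : X) : zIter g 1 x = g x := by
  simp [zIter]

lemma zIter_neg_cancel {X : Type*} (g : Equiv.Perm X) (n : ℤ) (x : X) :
    zIter g (-n) (zIter g n x) = x := by
  rw [← zIter_add]; simp [zIter_zero]

lemma zIter_cancel_neg {X : Type*} (g : Equiv.Perm X) (n : ℤ) (x : X) :
    zIter g n (zIter g (-n) x) = x := by
  rw [← zIter_add]; simp [zIter_zero]

lemma zIter_homeo {X : Type*} [TopologicalSpace X] (α : X ≃ₜ X) (n : ℤ) (x : X) :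
    zIter α.toEquiv n x = (α ^ n : X ≃ₜ X) x := by
  have key : ∀ m : ℕ, ∀ x, zIter α.toEquiv (m : ℤ) x = (α ^ (m : ℤ) : X ≃ₜ X) x := by
    intro m
    induction m with
    | zero => intro x; simp [zIter]
    | succ k ih =>
      intro x
      push_cast
      rw [zIter_add, zIter_one, ih, zpow_add, zpow_one]; rfl
  obtain ⟨m, rfl | rfl⟩ := n.eq_nat_or_neg
  · exact key m x
  · have h1 := zIter_cancel_neg α.toEquiv m x
    rw [key] at h1
    have h2 : (α ^ (m : ℤ) : X ≃ₜ X) ((α ^ (-(m : ℤ)) : X ≃ₜ X) x) = x := by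
      rw [← Homeomorph.mul_apply, ← zpow_add]; simp
    exact (α ^ (m : ℤ) : X ≃ₜ X).injective (h1.trans h2.symm)

lemma zIter_continuous {X : Type*} [TopologicalSpace X] (α : X ≃ₜ X) (n : ℤ) :
    Continuous (zIter α.toEquiv n) := by
  have : zIter α.toEquiv n = (α ^ n : X ≃ₜ X) := funext (zIter_homeo α n)
  rw [this]; exact (α ^ n : X ≃ₜ X).continuous

lemma aperiodic {Θ : Type*} [MetricSpace Θ] [Infinite Θ]
    (α : Θ ≃ₜ Θ) (hmin : MinimalHomeo α) (θ : Θ) (n : ℤ) (h : zIter α.toEquiv n θ = θ) : n = 0 := by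
  by_contra hn
  have hmul : ∀ q : ℤ, zIter α.toEquiv (n * q) θ = θ := by
    intro q
    induction q using Int.induction_on with
    | zero => simp [zIter_zero]
    | succ i ih => rw [mul_add, mul_one, zIter_add, h, ih]
    | pred i ih =>
      have h' : zIter α.toEquiv (-n) θ = θ := by
        conv_lhs => rw [← h]
        exact zIter_neg_cancel _ _ _
      rw [mul_sub, mul_one, sub_eq_add_neg, zIter_add, h', ih]
  have hfin : (range fun k : ℤ => zIter α.toEquiv k θ).Finite := by
    apply ((Set.finite_Ico (0:ℤ) |n|).image (fun k => zIter α.toEquiv k θ)).subset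
    rintro _ ⟨k, rfl⟩
    refine ⟨k % n, ⟨Int.emod_nonneg k hn, Int.emod_lt_abs k hn⟩, ?_⟩
    have : k = k % n + n * (k / n) := by rw [Int.emod_add_mul_ediv]
    show _ = zIter α.toEquiv k θ
    conv_rhs => rw [this, zIter_add, hmul]
  have h1 := (hmin θ).closure_eq
  rw [hfin.isClosed.closure_eq] at h1
  rw [h1] at hfin
  exact Set.infinite_univ hfin

lemma perfect_of_minimal {Θ : Type*} [MetricSpace Θ] [CompactSpace Θ] [Infinite Θ]
    (α : Θ ≃ₜ Θ) (hmin : MinimalHomeo α) (θ : Θ) : (𝓝[≠] θ).NeBot := by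
  by_contra hcon
  have hopen : IsOpen ({θ} : Set Θ) := by
    rw [isOpen_singleton_iff_punctured_nhds]
    simpa [Filter.neBot_iff] using hcon
  have : DiscreteTopology Θ := by
    rw [discreteTopology_iff_isOpen_singleton]
    intro y
    obtain ⟨z, ⟨n, hn⟩, hz⟩ := (hmin y).exists_mem_open hopen ⟨θ, rfl⟩
    have hn' : zIter α.toEquiv n y = θ := by simpa [hn] using hz
    have := hopen.preimage (zIter_continuous α n)
    convert this
    ext w
    simp only [mem_singleton_iff, mem_preimage]
    constructor
    · rintro rfl; exact hn'
    · intro hw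
      rw [← hn'] at hw
      exact (α.toEquiv ^ n : Equiv.Perm Θ).injective hw
  have := finite_of_compact_of_discrete (X := Θ)
  exact not_finite Θ

lemma equicont {Θ : Type*} [MetricSpace Θ] [CompactSpace Θ]
    (α : Θ ≃ₜ Θ) (hap : AlmostPeriodicHomeo α) :
    ∀ ε > (0 : ℝ), ∃ δ > (0 : ℝ), ∀ y y' : Θ, dist y y' < δ →
        ∀ n : ℤ, dist (zIter α.toEquiv n y) (zIter α.toEquiv n y') < ε := by
  intro ε hε
  obtain ⟨N, hN⟩ := hap (ε / 3) (by positivity)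
  have huc : ∀ j : ℤ, ∀ᶠ δ in 𝓝[>] (0:ℝ), ∀ y y' : Θ, dist y y' < δ →
      dist (zIter α.toEquiv j y) (zIter α.toEquiv j y') < ε / 3 := by
    intro j
    have := CompactSpace.uniformContinuous_of_continuous (zIter_continuous α j)
    rw [Metric.uniformContinuous_iff] at this
    obtain ⟨δ, hδ, h⟩ := this (ε / 3) (by positivity)
    filter_upwards [Ioo_mem_nhdsGT hδ] with d hd y y' hy
    exact h (hy.trans hd.2)
  have hall : ∀ᶠ δ in 𝓝[>] (0:ℝ), ∀ j ∈ Set.Icc (-(N:ℤ)) N, ∀ y y' : Θ, dist y y' < δ →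
      dist (zIter α.toEquiv j y) (zIter α.toEquiv j y') < ε / 3 :=
    (Filter.eventually_all_finite (Set.finite_Icc _ _)).2 fun j _ => huc j
  obtain ⟨δ, hδ, hδ0⟩ := (hall.and self_mem_nhdsWithin).exists
  refine ⟨δ, hδ0, fun y y' hy n => ?_⟩
  obtain ⟨k, hk, hkn⟩ := hN n
  have hj := hδ (n - k) (by rw [abs_le] at hkn; constructor <;> omega) y y' hy
  have e : ∀ z, zIter α.toEquiv n z = zIter α.toEquiv k (zIter α.toEquiv (n - k) z) := by
    intro z; rw [← zIter_add]; congr 1; ring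
  rw [e, e]
  have h1 := hk (zIter α.toEquiv (n - k) y)
  have h2 := hk (zIter α.toEquiv (n - k) y')
  rw [dist_comm] at h2
  have t1 := dist_triangle (zIter α.toEquiv k (zIter α.toEquiv (n - k) y))
    (zIter α.toEquiv (n - k) y) (zIter α.toEquiv k (zIter α.toEquiv (n - k) y'))
  have t2 := dist_triangle (zIter α.toEquiv (n - k) y) (zIter α.toEquiv (n - k) y')
     (zIter α.toEquiv k (zIter α.toEquiv (n - k) y'))
  linarith

lemma forward_min {Θ : Type*} [MetricSpace Θ] [CompactSpace Θ]
    (α : Θ ≃ₜ Θ) (hmin : MinimalHomeo α) (S : Set Θ) (hS : IsClosed S) (hne : S.Nonempty)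
    (hinv : ∀ θ ∈ S, α θ ∈ S) : S = univ := by
  let T : ℕ → Set Θ := fun n => {θ | zIter α.toEquiv (-(n:ℤ)) θ ∈ S}
  have hstep : ∀ n, T (n + 1) ⊆ T n := by
    intro n θ hθ
    have := hinv _ hθ
    show zIter α.toEquiv (-(n:ℤ)) θ ∈ S
    have e : α (zIter α.toEquiv (-((n + 1 : ℕ):ℤ)) θ) = zIter α.toEquiv (-(n:ℤ)) θ := by
      have := zIter_one α.toEquiv (zIter α.toEquiv (-((n + 1 : ℕ):ℤ)) θ)
      rw [← zIter_add] at this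
      rw [show α (zIter α.toEquiv (-((n + 1 : ℕ):ℤ)) θ) = α.toEquiv (zIter α.toEquiv (-((n + 1 : ℕ):ℤ)) θ) from rfl, ← this]
      congr 1; push_cast; ring
    rwa [e] at this
  have hcl : ∀ n, IsClosed (T n) := fun n => hS.preimage (zIter_continuous α _)
  have hnon : (⋂ n, T n).Nonempty := by
    apply IsCompact.nonempty_iInter_of_sequence_nonempty_isCompact_isClosed T hstep _
      (hcl 0).isCompact hcl
    intro n
    obtain ⟨s, hs⟩ := hne
    exact ⟨zIter α.toEquiv n s, by show _ ∈ S; rwa [zIter_neg_cancel]⟩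
  obtain ⟨θ, hθ⟩ := hnon
  have hneg : ∀ n : ℕ, zIter α.toEquiv (-(n:ℤ)) θ ∈ S := fun n => mem_iInter.1 hθ n
  have hpos : ∀ n : ℕ, zIter α.toEquiv (n:ℤ) θ ∈ S := by
    intro n
    induction n with
    | zero => simpa using hneg 0
    | succ k ih =>
      have := hinv _ ih
      push_cast
      rw [add_comm, zIter_add, zIter_one]; exact this
  have hsub : (range fun n : ℤ => zIter α.toEquiv n θ) ⊆ S := by
    rintro _ ⟨n, rfl⟩
    obtain ⟨m, rfl | rfl⟩ := n.eq_nat_or_neg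
    · exact hpos m
    · exact hneg m
  exact hS.closure_eq ▸ ((hmin θ).mono hsub).closure_eq

lemma cont_of_closed_graph {X Y : Type*} [TopologicalSpace X] [TopologicalSpace Y] [CompactSpace Y]
    (g : X → Y) (h : IsClosed {p : X × Y | p.2 = g p.1}) : Continuous g := by
  rw [continuous_iff_isClosed]
  intro C hC
  have : g ⁻¹' C = Prod.fst '' ({p : X × Y | p.2 = g p.1} ∩ Prod.snd ⁻¹' C) := by
    ext x
    constructor
    · intro hx; exact ⟨(x, g x), ⟨rfl, hx⟩, rfl⟩
    · rintro ⟨⟨x, y⟩, ⟨h1, h2⟩, rfl⟩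
      change y = g x at h1; subst h1; exact h2
  rw [this]
  exact isClosedMap_fst_of_compactSpace _ (h.inter (hC.preimage continuous_snd))

/-- two accumulating interleaved sequences give oscillation functions. -/
lemma osc_exists {Θ : Type*} [MetricSpace Θ] [CompactSpace Θ] (θ0 : Θ) [hn : (𝓝[≠] θ0).NeBot] :
    ∃ A D : Θ → ℝ, Continuous A ∧ Continuous D ∧ (∀ θ, 0 ≤ A θ) ∧ (∀ θ, A θ ≤ D θ) ∧
      (∀ θ, D θ = 0 ↔ θ = θ0) ∧
      (∃ u : ℕ → Θ, Tendsto u atTop (𝓝 θ0) ∧ ∀ n, u n ≠ θ0 ∧ A (u n) = 0) ∧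
      (∃ u : ℕ → Θ, Tendsto u atTop (𝓝 θ0) ∧ ∀ n, u n ≠ θ0 ∧ A (u n) = D (u n)) := by
  obtain ⟨v, hv⟩ := exists_seq_tendsto (𝓝[≠] θ0)
  rw [tendsto_nhdsWithin_iff] at hv
  obtain ⟨hv1, hv2⟩ := hv
  have hd : Tendsto (fun n => (dist (v n) θ0)⁻¹) atTop atTop := by
    apply Tendsto.inv_tendsto_nhdsGT_zero
    rw [tendsto_nhdsWithin_iff]
    refine ⟨tendsto_iff_dist_tendsto_zero.1 hv1, ?_⟩
    filter_upwards [hv2] with n hn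
    exact dist_pos.2 hn
  obtain ⟨N, hN⟩ := eventually_atTop.1 hv2
  obtain ⟨s, hs, hs'⟩ := strictMono_subseq_of_tendsto_atTop (hd.comp (tendsto_add_atTop_nat N))
  let u : ℕ → Θ := fun n => v (s n + N)
  have hu : Tendsto u atTop (𝓝 θ0) := (hv1.comp (tendsto_add_atTop_nat N)).comp hs.tendsto_atTop
  have hu0 : ∀ n, u n ≠ θ0 := fun n => hN _ (by omega)
  have huinj : Injective u := by
    intro m n h
    apply hs'.injective
    simp only [comp_apply]
    show (dist (u m) θ0)⁻¹ = (dist (u n) θ0)⁻¹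
    rw [h]
  have hdbl : Tendsto (fun n : ℕ => 2 * n) atTop atTop :=
    tendsto_atTop_mono (fun n => by simp only [id]; omega) tendsto_id
  have hdbl1 : Tendsto (fun n : ℕ => 2 * n + 1) atTop atTop :=
    tendsto_atTop_mono (fun n => by simp only [id]; omega) tendsto_id
  let P : Set Θ := insert θ0 (range fun n => u (2 * n))
  let Q : Set Θ := insert θ0 (range fun n => u (2 * n + 1))
  have hP : IsClosed P := (hu.comp hdbl).isCompact_insert_range.isClosed
  have hQ : IsClosed Q := (hu.comp hdbl1).isCompact_insert_range.isClosed
  have hPn : P.Nonempty := ⟨θ0, Or.inl rfl⟩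
  have hQn : Q.Nonempty := ⟨θ0, Or.inl rfl⟩
  refine ⟨fun θ => Metric.infDist θ P, fun θ => Metric.infDist θ P + Metric.infDist θ Q,
    Metric.continuous_infDist_pt _, (Metric.continuous_infDist_pt _).add (Metric.continuous_infDist_pt _),
    fun θ => Metric.infDist_nonneg, fun θ => by simp [Metric.infDist_nonneg], ?_,
    ⟨fun n => u (2 * n), hu.comp hdbl, fun n => ⟨hu0 _, ?_⟩⟩,
    ⟨fun n => u (2 * n + 1), hu.comp hdbl1, fun n => ⟨hu0 _, ?_⟩⟩⟩
  · intro θ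
    constructor
    · intro h
      have h1 : Metric.infDist θ P = 0 :=
        le_antisymm (by have := Metric.infDist_nonneg (x := θ) (s := Q); linarith) Metric.infDist_nonneg
      have h2 : Metric.infDist θ Q = 0 := by linarith
      rw [← hP.mem_iff_infDist_zero hPn] at h1
      rw [← hQ.mem_iff_infDist_zero hQn] at h2
      rcases h1 with h1 | ⟨m, h1⟩
      · exact h1
      rcases h2 with h2 | ⟨k, h2⟩
      · exact h2
      have := huinj (h1.trans h2.symm)
      omega
    · intro h
      rw [h]
      show Metric.infDist θ0 P + Metric.infDist θ0 Q = 0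
      rw [(hP.mem_iff_infDist_zero hPn).1 (Or.inl rfl), (hQ.mem_iff_infDist_zero hQn).1 (Or.inl rfl)]
      simp
  · exact (hP.mem_iff_infDist_zero hPn).1 (Or.inr ⟨n, rfl⟩)
  · have := (hQ.mem_iff_infDist_zero hQn).1 (Or.inr ⟨n, rfl⟩)
    simp only at this ⊢
    rw [this]; simp

lemma skew_homeo {Θ : Type*} [TopologicalSpace Θ] (α : Θ ≃ₜ Θ) (φ : Θ × ℝ → ℝ) (hφ : Continuous φ)
    (hmono : ∀ θ, StrictMono fun x => φ (θ, x)) (hsurj : ∀ θ, Surjective fun x => φ (θ, x)) :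
    ∃ F : (Θ × ℝ) ≃ₜ (Θ × ℝ), ∀ p, F p = (α p.1, φ p) := by
  let F0 : Θ × ℝ → Θ × ℝ := fun p => (α p.1, φ p)
  have hbij : Bijective F0 := by
    constructor
    · rintro ⟨θ, x⟩ ⟨θ', x'⟩ h
      have h1 : θ = θ' := α.injective (congrArg Prod.fst h)
      subst h1
      have h2 : x = x' := (hmono θ).injective (congrArg Prod.snd h)
      rw [h2]
    · rintro ⟨θ, x⟩
      obtain ⟨y, hy⟩ := hsurj (α.symm θ) x
      exact ⟨(α.symm θ, y), Prod.ext (by simp [F0]) hy⟩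
  let e := Equiv.ofBijective F0 hbij
  have he : ∀ p, e p = (α p.1, φ p) := fun p => rfl
  have h1 : ∀ q, (e.symm q).1 = α.symm q.1 := by
    intro q
    have := congrArg Prod.fst (e.apply_symm_apply q)
    rw [he] at this
    rw [← this]; simp
  have h2 : ∀ q, φ (α.symm q.1, (e.symm q).2) = q.2 := by
    intro q
    have := congrArg Prod.snd (e.apply_symm_apply q)
    rw [he] at this
    rw [← h1]; exact this
  have hc : Continuous e.symm := by
    have hf : Continuous fun q => (e.symm q).1 := by
      simp only [h1]; exact α.symm.continuous.comp continuous_fst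
    have hs : Continuous fun q => (e.symm q).2 := by
      rw [continuous_iff_continuousAt]
      intro q
      have hcc : ∀ c : ℝ, Continuous fun q : Θ × ℝ => φ (α.symm q.1, c) := fun c =>
        hφ.comp ((α.symm.continuous.comp continuous_fst).prodMk continuous_const)
      refine tendsto_order.2 ⟨fun c hc => ?_, fun c hc => ?_⟩
      · have : φ (α.symm q.1, c) < q.2 := by
          rw [← h2 q]; exact hmono _ hc
        filter_upwards [(isOpen_lt (hcc c) continuous_snd).mem_nhds this] with q' hq'
        change φ (α.symm q'.1, c) < q'.2 at hq'
        rw [← h2 q'] at hq'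
        exact (hmono _).lt_iff_lt.1 hq'
      · have : q.2 < φ (α.symm q.1, c) := by
          rw [← h2 q]; exact hmono _ hc
        filter_upwards [(isOpen_lt continuous_snd (hcc c)).mem_nhds this] with q' hq'
        change q'.2 < φ (α.symm q'.1, c) at hq'
        rw [← h2 q'] at hq'
        exact (hmono _).lt_iff_lt.1 hq'
    exact hf.prodMk hs
  exact ⟨{ toEquiv := e, continuous_toFun := (α.continuous.comp continuous_fst).prodMk hφ,
           continuous_invFun := hc }, he⟩

lemma ext_homeo {Θ : Type*} [TopologicalSpace Θ] (α : Θ ≃ₜ Θ) {a b : ℝ} (hab : a < b)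
    (f : Θ × ↥(Icc a b) → Θ × ↥(Icc a b)) (hf : ForcedIncreasing (⇑α) f) :
    ∃ F : (Θ × ℝ) ≃ₜ (Θ × ℝ), (∀ p, (F p).1 = α p.1) ∧ (∀ θ, StrictMono fun x => (F (θ, x)).2) ∧
      ∀ θ (x : ↥(Icc a b)), F (θ, (x : ℝ)) = ((f (θ, x)).1, ((f (θ, x)).2 : ℝ)) := by
  obtain ⟨hfc, hf1, hfm⟩ := hf
  let φ : Θ × ℝ → ℝ := fun p =>
    ((f (p.1, projIcc a b hab.le p.2)).2 : ℝ) + (p.2 - (projIcc a b hab.le p.2 : ℝ))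
  have hφ : Continuous φ := by
    have hp : Continuous fun p : Θ × ℝ => projIcc a b hab.le p.2 := continuous_projIcc.comp continuous_snd
    have h1 : Continuous fun p : Θ × ℝ => (f (p.1, projIcc a b hab.le p.2)) :=
      hfc.comp (continuous_fst.prodMk hp)
    exact (continuous_subtype_val.comp (continuous_snd.comp h1)).add
      (continuous_snd.sub (continuous_subtype_val.comp hp))
  have hmono : ∀ θ, StrictMono fun x => φ (θ, x) := by
    intro θ x y hxy
    have hle : projIcc a b hab.le x ≤ projIcc a b hab.le y := monotone_projIcc _ hxy.le
    have hlip : x - (projIcc a b hab.le x : ℝ) ≤ y - (projIcc a b hab.le y : ℝ) := by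
      simp only [coe_projIcc]
      rcases max_cases a (min b x) with h | h <;> rcases max_cases a (min b y) with h' | h' <;>
      rcases min_cases b x with h'' | h'' <;> rcases min_cases b y with h3 | h3 <;> linarith
    rcases hle.lt_or_eq with hlt | heq
    · have : (f (θ, projIcc a b hab.le x)).2 < (f (θ, projIcc a b hab.le y)).2 := hfm θ hlt
      have : ((f (θ, projIcc a b hab.le x)).2 : ℝ) < (f (θ, projIcc a b hab.le y)).2 := this
      simp only [φ]; linarith
    · simp only [φ, heq]; linarith
  have hb : ∀ (z : ↥(Icc a b)), a ≤ (z : ℝ) ∧ (z : ℝ) ≤ b := fun z => z.2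
  have hsurj : ∀ θ, Surjective fun x => φ (θ, x) := by
    intro θ
    apply Continuous.surjective (hφ.comp (by fun_prop : Continuous fun x : ℝ => (θ, x)))
    · apply tendsto_atTop_mono (f := fun x => (a - b) + x) _ (tendsto_atTop_add_const_left _ _ tendsto_id)
      intro x
      have h1 := hb (f (θ, projIcc a b hab.le x)).2
      have h2 := hb (projIcc a b hab.le x)
      simp only [φ, comp_apply]; linarith
    · refine tendsto_atBot_mono (fun x => ?_) (tendsto_atBot_add_const_left _ (b - a) tendsto_id)
      have h1 := hb (f (θ, projIcc a b hab.le x)).2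
      have h2 := hb (projIcc a b hab.le x)
      simp only [φ, comp_apply, id]; linarith
  obtain ⟨F, hF⟩ := skew_homeo α φ hφ hmono hsurj
  refine ⟨F, fun p => by rw [hF], fun θ => by simpa only [hF] using hmono θ, fun θ x => ?_⟩
  rw [hF, hf1]
  simp [φ]

lemma ext_homeo_iter {Θ : Type*} [TopologicalSpace Θ] (α : Θ ≃ₜ Θ) {a b : ℝ} (hab : a < b)
    (f : Θ × ↥(Icc a b) → Θ × ↥(Icc a b)) (hf : ForcedIncreasing (⇑α) f)
    (γ : Θ → ↥(Icc a b)) (hγinv : ∀ θ : Θ, f (θ, γ θ) = (α θ, γ (α θ))) :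
    ∃ G : ℤ → Θ × ℝ → Θ × ℝ, (∀ k, Continuous (G k)) ∧
      (∀ k p, (G k p).1 = zIter α.toEquiv (-k) p.1) ∧
      (∀ k θ, StrictMono fun x => (G k (θ, x)).2) ∧
      (∀ k θ (x : ↥(Icc a b)), G (k + 1) ((f (θ, x)).1, ((f (θ, x)).2 : ℝ)) = G k (θ, (x : ℝ))) ∧
      (∀ k θ, (G k (θ, (γ θ : ℝ))).2 = γ (zIter α.toEquiv (-k) θ)) ∧ (∀ p, G 0 p = p) := by
  obtain ⟨F, hF1, hFm, hFf⟩ := ext_homeo α hab f hf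
  have hpred : ∀ (n : ℕ) p, zIter F.toEquiv (-((n + 1 : ℕ) : ℤ)) p = F.symm (zIter F.toEquiv (-(n:ℤ)) p) := by
    intro n p
    apply F.injective
    rw [F.apply_symm_apply]
    have := zIter_one F.toEquiv (zIter F.toEquiv (-((n + 1 : ℕ):ℤ)) p)
    rw [← zIter_add] at this
    rw [show F (zIter F.toEquiv (-((n + 1 : ℕ):ℤ)) p) = F.toEquiv (zIter F.toEquiv (-((n + 1 : ℕ):ℤ)) p) from rfl, ← this]
    congr 1; push_cast; ring
  have hsucc : ∀ (n : ℕ) p, zIter F.toEquiv ((n + 1 : ℕ) : ℤ) p = F (zIter F.toEquiv n p) := by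
    intro n p
    push_cast
    rw [add_comm, zIter_add, zIter_one]; rfl
  have hpredα : ∀ (n : ℕ) p, zIter α.toEquiv (-((n + 1 : ℕ) : ℤ)) p = α.symm (zIter α.toEquiv (-(n:ℤ)) p) := by
    intro n p
    apply α.injective
    rw [α.apply_symm_apply]
    have := zIter_one α.toEquiv (zIter α.toEquiv (-((n + 1 : ℕ):ℤ)) p)
    rw [← zIter_add] at this
    rw [show α (zIter α.toEquiv (-((n + 1 : ℕ):ℤ)) p) = α.toEquiv (zIter α.toEquiv (-((n + 1 : ℕ):ℤ)) p) from rfl, ← this]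
    congr 1; push_cast; ring
  have hsuccα : ∀ (n : ℕ) p, zIter α.toEquiv ((n + 1 : ℕ) : ℤ) p = α (zIter α.toEquiv n p) := by
    intro n p
    push_cast
    rw [add_comm, zIter_add, zIter_one]; rfl
  have hs1 : ∀ p, (F.symm p).1 = α.symm p.1 := by
    intro p
    apply α.injective
    rw [← hF1]; simp
  have hfst : ∀ k p, (zIter F.toEquiv k p).1 = zIter α.toEquiv k p.1 := by
    intro k p
    obtain ⟨n, rfl | rfl⟩ := k.eq_nat_or_neg
    · induction n with
      | zero => simp [zIter_zero]
      | succ n ih => rw [hsucc, hF1, ih, hsuccα]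
    · induction n with
      | zero => simp [zIter_zero]
      | succ n ih => rw [hpred, hs1, ih, hpredα]
  have hsm : ∀ θ, StrictMono fun x => (F.symm (θ, x)).2 := by
    intro θ x y hxy
    have hx : ∀ x, F (α.symm θ, (F.symm (θ, x)).2) = (θ, x) := by
      intro x
      have : (α.symm θ, (F.symm (θ, x)).2) = F.symm (θ, x) := Prod.ext (hs1 (θ, x)).symm rfl
      rw [this]; simp
    have := (hFm (α.symm θ)).lt_iff_lt (a := (F.symm (θ, x)).2) (b := (F.symm (θ, y)).2)
    rw [hx, hx] at this
    exact this.1 hxy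
  have hmono : ∀ k θ, StrictMono fun x => (zIter F.toEquiv k (θ, x)).2 := by
    intro k θ
    obtain ⟨n, rfl | rfl⟩ := k.eq_nat_or_neg
    · induction n with
      | zero => intro x y h; simpa [zIter_zero] using h
      | succ n ih =>
        intro x y h
        have h1 := ih h
        simp only [hsucc]
        have := hFm (zIter α.toEquiv n θ) h1
        have e : ∀ x, (zIter α.toEquiv n θ, (zIter F.toEquiv n (θ, x)).2) = zIter F.toEquiv n (θ, x) :=
          fun x => Prod.ext (hfst _ (θ, x)).symm rfl
        simpa only [e] using this
    · induction n with
      | zero => intro x y h; simpa [zIter_zero] using h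
      | succ n ih =>
        intro x y h
        have h1 := ih h
        simp only [hpred]
        have := hsm (zIter α.toEquiv (-(n:ℤ)) θ) h1
        have e : ∀ x, (zIter α.toEquiv (-(n:ℤ)) θ, (zIter F.toEquiv (-(n:ℤ)) (θ, x)).2) = zIter F.toEquiv (-(n:ℤ)) (θ, x) :=
          fun x => Prod.ext (hfst _ (θ, x)).symm rfl
        simpa only [e] using this
  have hFγ : ∀ θ, F (θ, (γ θ : ℝ)) = (α θ, (γ (α θ) : ℝ)) := by
    intro θ; rw [hFf, hγinv]
  have hsγ : ∀ θ, F.symm (θ, (γ θ : ℝ)) = (α.symm θ, (γ (α.symm θ) : ℝ)) := by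
    intro θ
    apply F.injective
    rw [hFγ]; simp
  have hγ : ∀ k θ, zIter F.toEquiv k (θ, (γ θ : ℝ)) = (zIter α.toEquiv k θ, (γ (zIter α.toEquiv k θ) : ℝ)) := by
    intro k θ
    obtain ⟨n, rfl | rfl⟩ := k.eq_nat_or_neg
    · induction n with
      | zero => simp [zIter_zero]
      | succ n ih => rw [hsucc, ih, hFγ, hsuccα]
    · induction n with
      | zero => simp [zIter_zero]
      | succ n ih => rw [hpred, ih, hsγ, hpredα]
  refine ⟨fun k => zIter F.toEquiv (-k), fun k => zIter_continuous F _, fun k p => hfst _ _,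
    fun k θ => hmono _ _, fun k θ x => ?_, fun k θ => congrArg Prod.snd (hγ (-k) θ), fun p => by simp [zIter_zero]⟩
  show zIter F.toEquiv (-(k+1)) _ = zIter F.toEquiv (-k) _
  rw [← hFf, neg_add, zIter_add]
  congr 1
  have := zIter_neg_cancel F.toEquiv 1 (θ, (x:ℝ))
  rwa [zIter_one] at this

structure BD (Θ : Type) [MetricSpace Θ] [CompactSpace Θ] where
  α : Θ ≃ₜ Θ
  a : ℝ
  b : ℝ
  hab : a < b
  f : Θ × ↥(Icc a b) → Θ × ↥(Icc a b)
  hf : ForcedIncreasing (⇑α) f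
  γ : Θ → ↥(Icc a b)
  hγ : Continuous γ
  hγa : ∀ θ, a < γ θ
  hγb : ∀ θ, γ θ < b
  hγinv : ∀ θ : Θ, f (θ, γ θ) = (α θ, γ (α θ))
  G : ℤ → Θ × ℝ → Θ × ℝ
  hG : ∀ k, Continuous (G k)
  hG1 : ∀ k p, (G k p).1 = zIter α.toEquiv (-k) p.1
  hGm : ∀ k θ, StrictMono fun x => (G k (θ, x)).2
  hGf : ∀ k θ (x : ↥(Icc a b)), G (k + 1) ((f (θ, x)).1, ((f (θ, x)).2 : ℝ)) = G k (θ, (x : ℝ))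
  hGγ : ∀ k θ, (G k (θ, (γ θ : ℝ))).2 = γ (zIter α.toEquiv (-k) θ)
  hG0 : ∀ p, G 0 p = p
  θ0 : Θ
  A : Θ → ℝ
  D : Θ → ℝ
  hA : Continuous A
  hD : Continuous D
  hA0 : ∀ θ, 0 ≤ A θ
  hAD : ∀ θ, A θ ≤ D θ
  hD0 : ∀ θ, D θ = 0 ↔ θ = θ0
  hu : ∃ u : ℕ → Θ, Tendsto u atTop (𝓝 θ0) ∧ ∀ n, u n ≠ θ0 ∧ A (u n) = 0
  hv : ∃ u : ℕ → Θ, Tendsto u atTop (𝓝 θ0) ∧ ∀ n, u n ≠ θ0 ∧ A (u n) = D (u n)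
  hper : ∀ n, zIter α.toEquiv n θ0 = θ0 → n = 0

namespace BD

variable {Θ : Type} [MetricSpace Θ] [CompactSpace Θ] (S : BD Θ)

def R (p : Θ × ℝ) (s : ℝ) : Prop :=
  (s < 1 → p.2 - S.γ p.1 ≤ S.D p.1 * s - S.A p.1) ∧ (0 < s → S.D p.1 * s - S.A p.1 ≤ p.2 - S.γ p.1)

lemma D_nonneg (θ : Θ) : 0 ≤ S.D θ := (S.hA0 θ).trans (S.hAD θ)

lemma R_closed : IsClosed {q : (Θ × ℝ) × ℝ | S.R q.1 q.2} := by
  have h1 := S.hA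
  have h2 := S.hD
  have h3 : Continuous fun θ => (S.γ θ : ℝ) := continuous_subtype_val.comp S.hγ
  have e : {q : (Θ × ℝ) × ℝ | S.R q.1 q.2} =
      ({q | 1 ≤ q.2} ∪ {q | q.1.2 - S.γ q.1.1 ≤ S.D q.1.1 * q.2 - S.A q.1.1}) ∩
      ({q | q.2 ≤ 0} ∪ {q | S.D q.1.1 * q.2 - S.A q.1.1 ≤ q.1.2 - S.γ q.1.1}) := by
    ext q
    simp only [R, mem_inter_iff, mem_union, Set.mem_ofPred_eq, imp_iff_not_or, not_lt]
  rw [e]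
  have h4 : Continuous fun q : (Θ × ℝ) × ℝ => q.1.2 - (S.γ q.1.1 : ℝ) :=
    (continuous_snd.comp continuous_fst).sub (h3.comp (continuous_fst.comp continuous_fst))
  have h5 : Continuous fun q : (Θ × ℝ) × ℝ => S.D q.1.1 * q.2 - S.A q.1.1 :=
    ((h2.comp (continuous_fst.comp continuous_fst)).mul continuous_snd).sub
      (h1.comp (continuous_fst.comp continuous_fst))
  exact ((isClosed_le continuous_const continuous_snd).union (isClosed_le h4 h5)).inter
    ((isClosed_le continuous_snd continuous_const).union (isClosed_le h5 h4))

lemma R_mono {p p' : Θ × ℝ} {s s' : ℝ} (h1 : p.1 = p'.1) (h2 : p.2 < p'.2)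
    (hs : s ∈ Icc (0:ℝ) 1) (hs' : s' ∈ Icc (0:ℝ) 1) (h : S.R p s) (h' : S.R p' s') : s ≤ s' := by
  by_contra hlt
  push Not at hlt
  have i1 := h.2 (lt_of_le_of_lt hs'.1 hlt)
  have i2 := h'.1 (lt_of_lt_of_le hlt hs.2)
  rw [← h1] at i2
  have := mul_le_mul_of_nonneg_left hlt.le (S.D_nonneg p.1)
  linarith

lemma R_lt {p : Θ × ℝ} {s s' : ℝ} (hs : s ∈ Icc (0:ℝ) 1) (hs' : s' ∈ Icc (0:ℝ) 1)
    (h : S.R p s) (h' : S.R p s') (hlt : s < s') : p.1 = S.θ0 ∧ p.2 = S.γ p.1 := by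
  have i1 := h'.2 (lt_of_le_of_lt hs.1 hlt)
  have i2 := h.1 (lt_of_lt_of_le hlt hs'.2)
  have hd : S.D p.1 = 0 := by
    by_contra hne
    have hpos : 0 < S.D p.1 := lt_of_le_of_ne (S.D_nonneg _) (Ne.symm hne)
    have := mul_lt_mul_of_pos_left hlt hpos
    linarith
  have hA : S.A p.1 = 0 := le_antisymm (by have := S.hAD p.1; linarith) (S.hA0 _)
  refine ⟨(S.hD0 _).1 hd, ?_⟩
  rw [hd, hA] at i1 i2
  linarith

lemma R_ne {p : Θ × ℝ} {s s' : ℝ} (hs : s ∈ Icc (0:ℝ) 1) (hs' : s' ∈ Icc (0:ℝ) 1)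
    (h : S.R p s) (h' : S.R p s') (hne : s ≠ s') : p.1 = S.θ0 ∧ p.2 = S.γ p.1 := by
  rcases lt_or_gt_of_ne hne with hlt | hlt
  · exact S.R_lt hs hs' h h' hlt
  · exact S.R_lt hs' hs h' h hlt

lemma R_any {p : Θ × ℝ} (h1 : p.1 = S.θ0) (h2 : p.2 = S.γ p.1) (s : ℝ) : S.R p s := by
  have hd := (S.hD0 p.1).2 h1
  have hA : S.A p.1 = 0 := le_antisymm (by have := S.hAD p.1; linarith) (S.hA0 _)
  constructor <;> intro _ <;> rw [hd, hA, h2] <;> simp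

lemma R_exists (p : Θ × ℝ) : ∃ s : unitInterval, S.R p s := by
  by_cases c1 : p.2 - S.γ p.1 ≤ - S.A p.1
  · exact ⟨0, by constructor <;> intro h <;> simp at h ⊢; linarith⟩
  by_cases c2 : S.D p.1 - S.A p.1 ≤ p.2 - S.γ p.1
  · exact ⟨1, by constructor <;> intro h <;> simp at h ⊢; linarith⟩
  push Not at c1 c2
  have hD : 0 < S.D p.1 := by linarith
  refine ⟨⟨(p.2 - S.γ p.1 + S.A p.1) / S.D p.1, ?_, ?_⟩, ?_⟩
  · apply div_nonneg _ hD.le; linarith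
  · rw [div_le_one hD]; linarith
  · have : S.D p.1 * ((p.2 - S.γ p.1 + S.A p.1) / S.D p.1) = p.2 - S.γ p.1 + S.A p.1 := by
      field_simp
    constructor <;> intro _ <;> simp only [this] <;> linarith

lemma R_avg {p : Θ × ℝ} {s s' : ℝ} (hs : s ∈ Icc (0:ℝ) 1) (hs' : s' ∈ Icc (0:ℝ) 1)
    (h : S.R p s) (h' : S.R p s') : S.R p ((s + s') / 2) := by
  by_cases he : s = s'
  · subst he; simpa using h
  · obtain ⟨h1, h2⟩ := S.R_ne hs hs' h h' he
    exact S.R_any h1 h2 _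

/-- On the curve, away from `θ0`. -/
lemma R_curve {p : Θ × ℝ} {s : ℝ} (hs : s ∈ Icc (0:ℝ) 1) (h2 : p.2 = S.γ p.1)
    (h : S.R p s) : S.D p.1 * s = S.A p.1 := by
  have a0 := S.hA0 p.1
  have aD := S.hAD p.1
  have hd := S.D_nonneg p.1
  unfold R at h
  rw [h2, sub_self] at h
  apply le_antisymm
  · rcases hs.1.eq_or_lt with h0 | h0
    · rw [← h0]; simpa using a0
    · have := h.2 h0; linarith
  · rcases hs.2.eq_or_lt with h0 | h0
    · rw [h0]; simpa using aD
    · have := h.1 h0; linarith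

def Z : Set (Θ × ↥(Icc S.a S.b) × (ℤ → unitInterval)) :=
  {z | ∀ k, S.R (S.G k (z.1, (z.2.1 : ℝ))) (z.2.2 k)}

lemma Z_closed : IsClosed S.Z := by
  have : S.Z = ⋂ k, {z | S.R (S.G k (z.1, (z.2.1 : ℝ))) (z.2.2 k)} := by
    ext z
    rw [mem_iInter]; rfl
  rw [this]
  refine isClosed_iInter fun k => ?_
  have hc : Continuous fun z : Θ × ↥(Icc S.a S.b) × (ℤ → unitInterval) =>
      (S.G k (z.1, (z.2.1 : ℝ)), (z.2.2 k : ℝ)) := by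
    have := S.hG k
    apply Continuous.prodMk
    · exact this.comp (by fun_prop)
    · fun_prop
  exact S.R_closed.preimage hc

instance : CompactSpace ↥S.Z := isCompact_iff_compactSpace.1 S.Z_closed.isCompact

def w (k : ℤ) : ℝ := (1 / 2 : ℝ) ^ Encodable.encode k

lemma w_pos (k : ℤ) : 0 < w k := by unfold w; positivity

lemma w_sum : Summable w := summable_geometric_two_encode

def e (z : Θ × ↥(Icc S.a S.b) × (ℤ → unitInterval)) : ℝ :=
  (z.2.1 : ℝ) + ∑' k, w k * (z.2.2 k : ℝ)

lemma e_summable (t : ℤ → unitInterval) : Summable fun k => w k * (t k : ℝ) :=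
  Summable.of_nonneg_of_le (fun k => mul_nonneg (w_pos k).le (t k).2.1)
    (fun k => mul_le_of_le_one_right (w_pos k).le (t k).2.2) w_sum

lemma e_cont : Continuous S.e := by
  apply Continuous.add
  · fun_prop
  · apply continuous_tsum _ w_sum
    · intro k z
      rw [Real.norm_of_nonneg (mul_nonneg (w_pos k).le (z.2.2 k).2.1)]
      exact mul_le_of_le_one_right (w_pos k).le (z.2.2 k).2.2
    · intro k; fun_prop

lemma e_lt {z z' : Θ × ↥(Icc S.a S.b) × (ℤ → unitInterval)} (h1 : z.2.1 ≤ z'.2.1)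
    (h2 : ∀ k, z.2.2 k ≤ z'.2.2 k) (hne : z.2 ≠ z'.2) : S.e z < S.e z' := by
  have hx : (z.2.1 : ℝ) ≤ z'.2.1 := h1
  have ht : ∀ k, w k * (z.2.2 k : ℝ) ≤ w k * (z'.2.2 k : ℝ) := fun k =>
    mul_le_mul_of_nonneg_left (h2 k) (w_pos k).le
  by_cases hxx : z.2.1 = z'.2.1
  · have : ∃ k, z.2.2 k ≠ z'.2.2 k := by
      by_contra hc
      push Not at hc
      exact hne (Prod.ext hxx (funext hc))
    obtain ⟨k, hk⟩ := this
    have hlt : (z.2.2 k : ℝ) < z'.2.2 k := lt_of_le_of_ne (h2 k) (fun h => hk (Subtype.ext h))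
    have := Summable.tsum_lt_tsum (i := k) ht (mul_lt_mul_of_pos_left hlt (w_pos k))
      (e_summable z.2.2) (e_summable z'.2.2)
    unfold e; linarith
  · have hlt : (z.2.1 : ℝ) < z'.2.1 := lt_of_le_of_ne h1 (fun h => hxx (Subtype.ext h))
    have := Summable.tsum_le_tsum ht (e_summable z.2.2) (e_summable z'.2.2)
    unfold e; linarith

lemma sing_of_ne {z z' : Θ × ↥(Icc S.a S.b) × (ℤ → unitInterval)} (hz : z ∈ S.Z) (hz' : z' ∈ S.Z)
    (h1 : z.1 = z'.1) (h2 : z.2.1 = z'.2.1) (k : ℤ) (hk : z.2.2 k ≠ z'.2.2 k) :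
    z.1 = zIter S.α.toEquiv k S.θ0 ∧ z.2.1 = S.γ z.1 := by
  have r1 := hz k
  have r2 := hz' k
  rw [← h1, ← h2] at r2
  obtain ⟨c1, c2⟩ := S.R_ne (z.2.2 k).2 (z'.2.2 k).2 r1 r2 (fun h => hk (Subtype.ext h))
  rw [S.hG1] at c1 c2
  have d1 : z.1 = zIter S.α.toEquiv k S.θ0 := by rw [← c1, zIter_cancel_neg]
  refine ⟨d1, ?_⟩
  rw [← S.hGγ] at c2
  exact Subtype.ext ((S.hGm k z.1).injective c2)

lemma Z_orbit_inj {m n : ℤ} (h : zIter S.α.toEquiv m S.θ0 = zIter S.α.toEquiv n S.θ0) : m = n := by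
  have : zIter S.α.toEquiv (-n + m) S.θ0 = S.θ0 := by
    rw [zIter_add, h, zIter_neg_cancel]
  have := S.hper _ this
  omega

lemma Z_t_le {z z' : Θ × ↥(Icc S.a S.b) × (ℤ → unitInterval)} (hz : z ∈ S.Z) (hz' : z' ∈ S.Z)
    (h1 : z.1 = z'.1) (h2 : z.2.1 < z'.2.1) (k : ℤ) : z.2.2 k ≤ z'.2.2 k := by
  have := S.R_mono (p := S.G k (z.1, (z.2.1:ℝ))) (p' := S.G k (z'.1, (z'.2.1:ℝ)))
    (by rw [S.hG1, S.hG1, h1]) (by rw [← h1]; exact S.hGm k z.1 h2) (z.2.2 k).2 (z'.2.2 k).2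
    (hz k) (hz' k)
  exact this

lemma Z_total {z z' : Θ × ↥(Icc S.a S.b) × (ℤ → unitInterval)} (hz : z ∈ S.Z) (hz' : z' ∈ S.Z)
    (h1 : z.1 = z'.1) : (z.2.1 ≤ z'.2.1 ∧ ∀ k, z.2.2 k ≤ z'.2.2 k) ∨
      (z'.2.1 ≤ z.2.1 ∧ ∀ k, z'.2.2 k ≤ z.2.2 k) := by
  rcases lt_trichotomy z.2.1 z'.2.1 with h | h | h
  · exact Or.inl ⟨h.le, S.Z_t_le hz hz' h1 h⟩
  · by_cases hall : ∀ k, z.2.2 k = z'.2.2 k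
    · exact Or.inl ⟨h.le, fun k => (hall k).le⟩
    · push Not at hall
      obtain ⟨k, hk⟩ := hall
      have hk' := (S.sing_of_ne hz hz' h1 h k hk).1
      have hoth : ∀ j, j ≠ k → z.2.2 j = z'.2.2 j := by
        intro j hj
        by_contra hne
        have := (S.sing_of_ne hz hz' h1 h j hne).1
        exact hj (S.Z_orbit_inj (this.symm.trans hk'))
      rcases le_total (z.2.2 k) (z'.2.2 k) with hle | hle
      · refine Or.inl ⟨h.le, fun j => ?_⟩
        by_cases hj : j = k
        · rw [hj]; exact hle
        · exact (hoth j hj).le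
      · refine Or.inr ⟨h.ge, fun j => ?_⟩
        by_cases hj : j = k
        · rw [hj]; exact hle
        · exact (hoth j hj).ge
  · exact Or.inr ⟨h.le, S.Z_t_le hz' hz h1.symm h⟩

lemma le_of_e_le {z z' : Θ × ↥(Icc S.a S.b) × (ℤ → unitInterval)} (hz : z ∈ S.Z) (hz' : z' ∈ S.Z)
    (h1 : z.1 = z'.1) (he : S.e z ≤ S.e z') : z.2.1 ≤ z'.2.1 ∧ ∀ k, z.2.2 k ≤ z'.2.2 k := by
  rcases S.Z_total hz hz' h1 with h | h
  · exact h
  · by_cases hne : z'.2 = z.2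
    · rw [hne]; exact ⟨le_rfl, fun _ => le_rfl⟩
    · exact absurd (S.e_lt h.1 h.2 hne) (not_lt.2 he)

lemma e_inj {z z' : Θ × ↥(Icc S.a S.b) × (ℤ → unitInterval)} (hz : z ∈ S.Z) (hz' : z' ∈ S.Z)
    (h1 : z.1 = z'.1) (he : S.e z = S.e z') : z = z' := by
  have i1 := S.le_of_e_le hz hz' h1 he.le
  have i2 := S.le_of_e_le hz' hz h1.symm he.ge
  exact Prod.ext h1 (Prod.ext (le_antisymm i1.1 i2.1) (funext fun k => le_antisymm (i1.2 k) (i2.2 k)))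

lemma e_le {z z' : Θ × ↥(Icc S.a S.b) × (ℤ → unitInterval)} (h1 : z.2.1 ≤ z'.2.1)
    (h2 : ∀ k, z.2.2 k ≤ z'.2.2 k) : S.e z ≤ S.e z' := by
  by_cases hne : z.2 = z'.2
  · unfold e; rw [hne]
  · exact (S.e_lt h1 h2 hne).le

lemma sec_exists (θ : Θ) (x : ↥(Icc S.a S.b)) : ∃ z : ↥S.Z, z.1.1 = θ ∧ z.1.2.1 = x := by
  choose t ht using fun k => S.R_exists (S.G k (θ, (x : ℝ)))
  exact ⟨⟨(θ, x, t), ht⟩, rfl, rfl⟩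

def sec (x : ↥(Icc S.a S.b)) (θ : Θ) : ↥S.Z := (S.sec_exists θ x).choose

lemma sec_1 (x : ↥(Icc S.a S.b)) (θ : Θ) : (S.sec x θ).1.1 = θ := (S.sec_exists θ x).choose_spec.1

lemma sec_2 (x : ↥(Icc S.a S.b)) (θ : Θ) : (S.sec x θ).1.2.1 = x := (S.sec_exists θ x).choose_spec.2

lemma Z_uniq {z z' : ↥S.Z} (h1 : z.1.1 = z'.1.1) (h2 : z.1.2.1 = z'.1.2.1)
    (h : z.1.2.1 = S.γ z.1.1 → ∀ k, z.1.1 ≠ zIter S.α.toEquiv k S.θ0) : z = z' := by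
  apply Subtype.ext
  refine Prod.ext h1 (Prod.ext h2 (funext fun k => ?_))
  by_contra hne
  obtain ⟨c1, c2⟩ := S.sing_of_ne z.2 z'.2 h1 h2 k hne
  exact h c2 k c1

lemma sec_cont (x : ↥(Icc S.a S.b)) (hx : ∀ θ, x ≠ S.γ θ) : Continuous (S.sec x) := by
  apply cont_of_closed_graph
  have : {p : Θ × ↥S.Z | p.2 = S.sec x p.1} = {p | p.2.1.1 = p.1} ∩ {p | p.2.1.2.1 = x} := by
    ext ⟨θ, z⟩
    simp only [mem_inter_iff, Set.mem_ofPred_eq]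
    constructor
    · rintro rfl; exact ⟨S.sec_1 x θ, S.sec_2 x θ⟩
    · rintro ⟨h1, h2⟩
      refine S.Z_uniq (by rw [h1, S.sec_1]) (by rw [h2, S.sec_2]) ?_
      intro h; rw [h2] at h; exact absurd h (hx _)
  rw [this]
  exact (isClosed_eq (by fun_prop) (by fun_prop)).inter (isClosed_eq (by fun_prop) (by fun_prop))

def ia : ↥(Icc S.a S.b) := ⟨S.a, le_rfl, S.hab.le⟩
def ib : ↥(Icc S.a S.b) := ⟨S.b, S.hab.le, le_rfl⟩

lemma ia_ne (θ : Θ) : S.ia ≠ S.γ θ := fun h => (S.hγa θ).ne (congrArg Subtype.val h)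
lemma ib_ne (θ : Θ) : S.ib ≠ S.γ θ := fun h => (S.hγb θ).ne' (congrArg Subtype.val h)

def lo (θ : Θ) : ℝ := S.e (S.sec S.ia θ).1
def hi (θ : Θ) : ℝ := S.e (S.sec S.ib θ).1

lemma lo_cont : Continuous S.lo :=
  S.e_cont.comp (continuous_subtype_val.comp (S.sec_cont _ S.ia_ne))
lemma hi_cont : Continuous S.hi :=
  S.e_cont.comp (continuous_subtype_val.comp (S.sec_cont _ S.ib_ne))

lemma lo_le (z : ↥S.Z) : S.lo z.1.1 ≤ S.e z.1 := by
  have hle : S.ia ≤ z.1.2.1 := z.1.2.1.2.1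
  rcases hle.eq_or_lt with h | h
  · have : S.sec S.ia z.1.1 = z := by
      apply S.Z_uniq (S.sec_1 _ _) (by rw [S.sec_2, h])
      intro h'; rw [S.sec_2] at h'; exact absurd h' (S.ia_ne _)
    unfold lo; rw [this]
  · refine S.e_le (by rw [S.sec_2]; exact hle) ?_
    exact S.Z_t_le (S.sec S.ia z.1.1).2 z.2 (S.sec_1 _ _) (by rw [S.sec_2]; exact h)

lemma le_hi (z : ↥S.Z) : S.e z.1 ≤ S.hi z.1.1 := by
  have hle : z.1.2.1 ≤ S.ib := z.1.2.1.2.2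
  rcases hle.eq_or_lt with h | h
  · have : S.sec S.ib z.1.1 = z := by
      apply S.Z_uniq (S.sec_1 _ _) (by rw [S.sec_2, h])
      intro h'; rw [S.sec_2] at h'; exact absurd h' (S.ib_ne _)
    unfold hi; rw [this]
  · refine S.e_le (by rw [S.sec_2]; exact hle) ?_
    exact S.Z_t_le z.2 (S.sec S.ib z.1.1).2 (S.sec_1 _ _).symm (by rw [S.sec_2]; exact h)

lemma hi_lo (θ : Θ) : S.b - S.a ≤ S.hi θ - S.lo θ := by
  have hlt : S.ia < S.ib := S.hab
  have ht := S.Z_t_le (S.sec S.ia θ).2 (S.sec S.ib θ).2 (by rw [S.sec_1, S.sec_1])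
    (by rw [S.sec_2, S.sec_2]; exact hlt)
  have := Summable.tsum_le_tsum (fun k => mul_le_mul_of_nonneg_left (a := w k)
    (show ((S.sec S.ia θ).1.2.2 k : ℝ) ≤ (S.sec S.ib θ).1.2.2 k from ht k) (w_pos k).le)
    (e_summable _) (e_summable _)
  unfold hi lo e
  rw [S.sec_2, S.sec_2]
  have h1 : (S.ia : ℝ) = S.a := rfl
  have h2 : (S.ib : ℝ) = S.b := rfl
  linarith

lemma surj_fib (θ : Θ) (v : ℝ) (h1 : S.lo θ ≤ v) (h2 : v ≤ S.hi θ) :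
    ∃ z : ↥S.Z, z.1.1 = θ ∧ S.e z.1 = v := by
  by_contra hno
  push Not at hno
  have hec : Continuous fun z : ↥S.Z => S.e z.1 := S.e_cont.comp continuous_subtype_val
  have hθc : IsClosed {z : ↥S.Z | z.1.1 = θ} := isClosed_eq (by fun_prop) continuous_const
  have c1 : IsCompact ({z : ↥S.Z | z.1.1 = θ} ∩ {z | S.e z.1 ≤ v}) :=
    (hθc.inter (isClosed_le hec continuous_const)).isCompact
  have c2 : IsCompact ({z : ↥S.Z | z.1.1 = θ} ∩ {z | v ≤ S.e z.1}) :=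
    (hθc.inter (isClosed_le continuous_const hec)).isCompact
  obtain ⟨z1, ⟨hz1, hv1⟩, hmax⟩ := c1.exists_isMaxOn ⟨S.sec S.ia θ, S.sec_1 _ _, h1⟩ hec.continuousOn
  obtain ⟨z2, ⟨hz2, hv2⟩, hmin⟩ := c2.exists_isMinOn ⟨S.sec S.ib θ, S.sec_1 _ _, h2⟩ hec.continuousOn
  change z1.1.1 = θ at hz1
  change z2.1.1 = θ at hz2
  have lt1 : S.e z1.1 < v := lt_of_le_of_ne hv1 (hno z1 hz1)
  have lt2 : v < S.e z2.1 := lt_of_le_of_ne hv2 (hno z2 hz2).symm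
  have hkey : ∀ z3 : ↥S.Z, z3.1.1 = θ → S.e z1.1 < S.e z3.1 → S.e z3.1 < S.e z2.1 → False := by
    intro z3 h3 i1 i2
    rcases le_total (S.e z3.1) v with h | h
    · exact absurd (hmax ⟨h3, h⟩) (not_le.2 i1)
    · exact absurd (hmin ⟨h3, h⟩) (not_le.2 i2)
  obtain ⟨hxle, htle⟩ := S.le_of_e_le z1.2 z2.2 (hz1.trans hz2.symm) (lt1.trans lt2).le
  have hne : z1.1.2 ≠ z2.1.2 := by
    intro h
    have : S.e z1.1 = S.e z2.1 := by unfold e; rw [h]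
    linarith
  rcases hxle.eq_or_lt with hx | hx
  · let t3 : ℤ → unitInterval := fun k => ⟨((z1.1.2.2 k : ℝ) + z2.1.2.2 k) / 2, by
      have := (z1.1.2.2 k).2.1
      have := (z2.1.2.2 k).2.1
      positivity, by
      have := (z1.1.2.2 k).2.2
      have := (z2.1.2.2 k).2.2
      linarith⟩
    have hz3 : ((θ, z1.1.2.1, t3) : Θ × ↥(Icc S.a S.b) × (ℤ → unitInterval)) ∈ S.Z := by
      intro k
      have r1 := z1.2 k
      have r2 := z2.2 k
      rw [hz1] at r1
      rw [hz2, ← hx] at r2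
      exact S.R_avg (z1.1.2.2 k).2 (z2.1.2.2 k).2 r1 r2
    have ht1 : ∀ k, (z1.1.2.2 k : ℝ) ≤ z2.1.2.2 k := htle
    have hle1 : ∀ k, z1.1.2.2 k ≤ t3 k := by
      intro k
      show (z1.1.2.2 k : ℝ) ≤ ((z1.1.2.2 k : ℝ) + z2.1.2.2 k) / 2
      have := ht1 k; linarith
    have hle2 : ∀ k, t3 k ≤ z2.1.2.2 k := by
      intro k
      show ((z1.1.2.2 k : ℝ) + z2.1.2.2 k) / 2 ≤ z2.1.2.2 k
      have := ht1 k; linarith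
    refine hkey ⟨_, hz3⟩ rfl (S.e_lt le_rfl hle1 ?_) (S.e_lt hx.le hle2 ?_)
    · intro h
      apply hne
      refine Prod.ext hx (funext fun k => Subtype.ext ?_)
      have : (z1.1.2.2 k : ℝ) = ((z1.1.2.2 k : ℝ) + z2.1.2.2 k) / 2 :=
        congrArg (fun q : ↥(Icc S.a S.b) × (ℤ → unitInterval) => (q.2 k : ℝ)) h
      linarith
    · intro h
      apply hne
      refine Prod.ext hx (funext fun k => Subtype.ext ?_)
      have : ((z1.1.2.2 k : ℝ) + z2.1.2.2 k) / 2 = z2.1.2.2 k :=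
        congrArg (fun q : ↥(Icc S.a S.b) × (ℤ → unitInterval) => (q.2 k : ℝ)) h
      linarith
  · have hx' : (z1.1.2.1 : ℝ) < z2.1.2.1 := hx
    let m : ↥(Icc S.a S.b) := ⟨((z1.1.2.1 : ℝ) + z2.1.2.1) / 2, by
      have := z1.1.2.1.2.1
      have := z2.1.2.1.2.1
      linarith, by
      have := z1.1.2.1.2.2
      have := z2.1.2.1.2.2
      linarith⟩
    have m1 : z1.1.2.1 < m := by
      show (z1.1.2.1 : ℝ) < ((z1.1.2.1 : ℝ) + z2.1.2.1) / 2
      linarith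
    have m2 : m < z2.1.2.1 := by
      show ((z1.1.2.1 : ℝ) + z2.1.2.1) / 2 < z2.1.2.1
      linarith
    have n1 : z1.1.2.1 < (S.sec m θ).1.2.1 := by rw [S.sec_2]; exact m1
    have n2 : (S.sec m θ).1.2.1 < z2.1.2.1 := by rw [S.sec_2]; exact m2
    refine hkey (S.sec m θ) (S.sec_1 _ _)
      (S.e_lt n1.le (S.Z_t_le z1.2 (S.sec m θ).2 (by rw [hz1, S.sec_1]) n1) ?_)
      (S.e_lt n2.le (S.Z_t_le (S.sec m θ).2 z2.2 (by rw [hz2, S.sec_1]) n2) ?_)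
    · intro h; exact n1.ne (congrArg Prod.fst h)
    · intro h; exact n2.ne (congrArg Prod.fst h)

lemma gap_pos (θ : Θ) : 0 < S.hi θ - S.lo θ := by
  have := S.hi_lo θ
  have := S.hab
  linarith

def Ev (z : ↥S.Z) : ℝ := S.a + (S.b - S.a) * ((S.e z.1 - S.lo z.1.1) / (S.hi z.1.1 - S.lo z.1.1))

lemma Ev_mem (z : ↥S.Z) : S.Ev z ∈ Icc S.a S.b := by
  have hg := S.gap_pos z.1.1
  have h1 := S.lo_le z
  have h2 := S.le_hi z
  have hab := S.hab
  have q0 : 0 ≤ (S.e z.1 - S.lo z.1.1) / (S.hi z.1.1 - S.lo z.1.1) := div_nonneg (by linarith) hg.le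
  have q1 : (S.e z.1 - S.lo z.1.1) / (S.hi z.1.1 - S.lo z.1.1) ≤ 1 := by
    rw [div_le_one hg]; linarith
  unfold Ev
  constructor <;> nlinarith

lemma Ev_diff {z z' : ↥S.Z} (h : z.1.1 = z'.1.1) :
    S.Ev z' - S.Ev z = (S.b - S.a) * ((S.e z'.1 - S.e z.1) / (S.hi z.1.1 - S.lo z.1.1)) := by
  unfold Ev
  rw [← h]; ring

lemma Ev_lt_iff {z z' : ↥S.Z} (h : z.1.1 = z'.1.1) : S.Ev z < S.Ev z' ↔ S.e z.1 < S.e z'.1 := by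
  rw [← sub_pos, S.Ev_diff h, mul_pos_iff_of_pos_left (sub_pos.2 S.hab),
    div_pos_iff_of_pos_right (S.gap_pos _), sub_pos]

lemma Ev_le_iff {z z' : ↥S.Z} (h : z.1.1 = z'.1.1) : S.Ev z ≤ S.Ev z' ↔ S.e z.1 ≤ S.e z'.1 := by
  rw [← not_lt, S.Ev_lt_iff h.symm, not_lt]

lemma Ev_cont : Continuous S.Ev := by
  have hv : Continuous fun z : ↥S.Z => z.1 := continuous_subtype_val
  have h1 : Continuous fun z : ↥S.Z => S.e z.1 := S.e_cont.comp hv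
  have h2 : Continuous fun z : ↥S.Z => S.lo z.1.1 := S.lo_cont.comp (continuous_fst.comp hv)
  have h3 : Continuous fun z : ↥S.Z => S.hi z.1.1 := S.hi_cont.comp (continuous_fst.comp hv)
  exact continuous_const.add (continuous_const.mul ((h1.sub h2).div (h3.sub h2)
    (fun z => (S.gap_pos z.1.1).ne')))

def E0 (z : ↥S.Z) : Θ × ↥(Icc S.a S.b) := (z.1.1, ⟨S.Ev z, S.Ev_mem z⟩)

lemma E0_bij : Bijective S.E0 := by
  constructor
  · intro z z' h
    have h1 : z.1.1 = z'.1.1 := (congrArg Prod.fst h : (S.E0 z).1 = (S.E0 z').1)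
    have h2 : S.Ev z = S.Ev z' := congrArg (fun q : Θ × ↥(Icc S.a S.b) => (q.2 : ℝ)) h
    apply Subtype.ext
    apply S.e_inj z.2 z'.2 h1
    exact le_antisymm ((S.Ev_le_iff h1).1 h2.le) ((S.Ev_le_iff h1.symm).1 h2.ge)
  · rintro ⟨θ, y⟩
    have hg := S.gap_pos θ
    have hab := S.hab
    have hba : 0 < S.b - S.a := by linarith
    have y0 := y.2.1
    have y1 := y.2.2
    have q0 : 0 ≤ ((y : ℝ) - S.a) / (S.b - S.a) := div_nonneg (by linarith) hba.le
    have q1 : ((y : ℝ) - S.a) / (S.b - S.a) ≤ 1 := by rw [div_le_one hba]; linarith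
    obtain ⟨z, hz, he⟩ := S.surj_fib θ (S.lo θ + (S.hi θ - S.lo θ) * (((y : ℝ) - S.a) / (S.b - S.a)))
      (by nlinarith) (by nlinarith)
    refine ⟨z, Prod.ext hz (Subtype.ext ?_)⟩
    show S.Ev z = y
    unfold Ev
    rw [he, hz]
    field_simp
    ring

lemma E0_cont : Continuous S.E0 := by
  unfold E0
  exact (continuous_fst.comp continuous_subtype_val).prodMk (S.Ev_cont.subtype_mk _)

def E : ↥S.Z ≃ₜ Θ × ↥(Icc S.a S.b) :=
  Continuous.homeoOfEquivCompactToT2 (f := Equiv.ofBijective S.E0 S.E0_bij) S.E0_cont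

lemma E_apply (z : ↥S.Z) : S.E z = (z.1.1, ⟨S.Ev z, S.Ev_mem z⟩) := rfl

lemma Esymm_1 (p : Θ × ↥(Icc S.a S.b)) : (S.E.symm p).1.1 = p.1 := by
  conv_rhs => rw [← S.E.apply_symm_apply p]
  rw [S.E_apply]

lemma Ev_symm (p : Θ × ↥(Icc S.a S.b)) : S.Ev (S.E.symm p) = p.2 := by
  conv_rhs => rw [← S.E.apply_symm_apply p]
  rw [S.E_apply]

def Fz (z : ↥S.Z) : ↥S.Z :=
  ⟨((S.f (z.1.1, z.1.2.1)).1, (S.f (z.1.1, z.1.2.1)).2, fun k => z.1.2.2 (k - 1)), by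
    intro k
    have := z.2 (k - 1)
    rw [← S.hGf, sub_add_cancel] at this
    exact this⟩

lemma Fz_cont : Continuous S.Fz := by
  have hf := S.hf.1
  have h1 : Continuous fun z : ↥S.Z => S.f (z.1.1, z.1.2.1) := hf.comp (by fun_prop)
  unfold Fz
  refine Continuous.subtype_mk ?_ _
  refine (continuous_fst.comp h1).prodMk ((continuous_snd.comp h1).prodMk ?_)
  exact continuous_pi fun k => (continuous_apply (k - 1)).comp
    (continuous_snd.comp (continuous_snd.comp continuous_subtype_val))

lemma Fz_1 (z : ↥S.Z) : (S.Fz z).1.1 = S.α z.1.1 := S.hf.2.1 _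

lemma Fz_mono {z z' : ↥S.Z} (h1 : z.1.1 = z'.1.1) (h : S.e z.1 < S.e z'.1) :
    S.e (S.Fz z).1 < S.e (S.Fz z').1 := by
  obtain ⟨hx, ht⟩ := S.le_of_e_le z.2 z'.2 h1 h.le
  have hfm := S.hf.2.2 z.1.1
  refine S.e_lt ?_ (fun k => ht (k - 1)) ?_
  · show (S.f (z.1.1, z.1.2.1)).2 ≤ (S.f (z'.1.1, z'.1.2.1)).2
    rw [← h1]; exact hfm.monotone hx
  · intro hh
    have a1 : (S.f (z.1.1, z.1.2.1)).2 = (S.f (z'.1.1, z'.1.2.1)).2 := congrArg Prod.fst hh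
    have a2 : ∀ k, z.1.2.2 (k - 1) = z'.1.2.2 (k - 1) := fun k => congrFun (congrArg Prod.snd hh) k
    rw [← h1] at a1
    have b1 : z.1.2.1 = z'.1.2.1 := hfm.injective a1
    have b2 : z.1.2.2 = z'.1.2.2 := funext fun k => by simpa using a2 (k + 1)
    have : S.e z.1 = S.e z'.1 := by unfold e; rw [b1, b2]
    linarith

def fhat (p : Θ × ↥(Icc S.a S.b)) : Θ × ↥(Icc S.a S.b) := S.E (S.Fz (S.E.symm p))

def h (p : Θ × ↥(Icc S.a S.b)) : Θ × ↥(Icc S.a S.b) := ((S.E.symm p).1.1, (S.E.symm p).1.2.1)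

lemma h_1 (p : Θ × ↥(Icc S.a S.b)) : (S.h p).1 = p.1 := S.Esymm_1 p

lemma h_E (z : ↥S.Z) : S.h (S.E z) = (z.1.1, z.1.2.1) := by
  unfold h; rw [S.E.symm_apply_apply]

lemma fhat_cont : Continuous S.fhat :=
  S.E.continuous.comp (S.Fz_cont.comp S.E.symm.continuous)

lemma fhat_forced : ForcedIncreasing (⇑S.α) S.fhat := by
  refine ⟨S.fhat_cont, fun p => ?_, fun θ x y hxy => ?_⟩
  · show (S.Fz (S.E.symm p)).1.1 = _
    rw [S.Fz_1, S.Esymm_1]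
  · show S.Ev (S.Fz (S.E.symm (θ, x))) < S.Ev (S.Fz (S.E.symm (θ, y)))
    have h0 : (S.E.symm (θ, x)).1.1 = (S.E.symm (θ, y)).1.1 := by rw [S.Esymm_1, S.Esymm_1]
    rw [S.Ev_lt_iff (by rw [S.Fz_1, S.Fz_1, h0])]
    apply S.Fz_mono h0
    rw [← S.Ev_lt_iff h0, S.Ev_symm, S.Ev_symm]
    exact hxy

lemma h_mono (θ : Θ) : Monotone fun x => (S.h (θ, x)).2 := by
  intro x y hxy
  have h0 : (S.E.symm (θ, x)).1.1 = (S.E.symm (θ, y)).1.1 := by rw [S.Esymm_1, S.Esymm_1]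
  refine (S.le_of_e_le (S.E.symm (θ, x)).2 (S.E.symm (θ, y)).2 h0 ?_).1
  rw [← S.Ev_le_iff h0, S.Ev_symm, S.Ev_symm]
  exact hxy

lemma h_factor : IsFactorMap S.fhat S.f S.h := by
  refine ⟨?_, fun p => ?_, ?_⟩
  · have : Continuous fun p => (S.E.symm p).1 := continuous_subtype_val.comp S.E.symm.continuous
    exact (continuous_fst.comp this).prodMk (continuous_fst.comp (continuous_snd.comp this))
  · refine ⟨S.E (S.sec p.2 p.1), ?_⟩
    rw [h_E, S.sec_1, S.sec_2]
  · funext p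
    simp only [comp_apply, fhat]
    rw [h_E]
    rfl

/-- uniqueness of preimages away from the blown-up points -/
lemma h_inj {p q : Θ × ↥(Icc S.a S.b)} (heq : S.h p = S.h q)
    (hne : (S.h p).2 = S.γ (S.h p).1 → ∀ k, (S.h p).1 ≠ zIter S.α.toEquiv k S.θ0) : p = q := by
  apply S.E.symm.injective
  exact S.Z_uniq (congrArg Prod.fst heq : (S.h p).1 = (S.h q).1)
    (congrArg Prod.snd heq : (S.h p).2 = (S.h q).2) hne

lemma no_curve (η : Θ → ↥(Icc S.a S.b)) (hη : Continuous η) :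
    ¬ (curveGraph η ⊆ S.h ⁻¹' curveGraph S.γ) := by
  intro hsub
  let s : Θ → ℝ := fun θ => ((S.E.symm (θ, η θ)).1.2.2 0 : ℝ)
  have hs : Continuous s := by
    have h1 : Continuous fun θ => (S.E.symm (θ, η θ)).1 :=
      continuous_subtype_val.comp (S.E.symm.continuous.comp (continuous_id.prodMk hη))
    exact continuous_subtype_val.comp
      ((continuous_apply (0:ℤ)).comp (continuous_snd.comp (continuous_snd.comp h1)))
  have hDs : ∀ θ, S.D θ * s θ = S.A θ := by
    intro θ
    have hm : (S.h (θ, η θ)).2 = S.γ (S.h (θ, η θ)).1 := hsub (show (θ, η θ) ∈ curveGraph η from rfl)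
    have r := (S.E.symm (θ, η θ)).2 0
    rw [S.hG0] at r
    have := S.R_curve ((S.E.symm (θ, η θ)).1.2.2 0).2 (congrArg Subtype.val hm) r
    rw [S.Esymm_1] at this
    exact this
  obtain ⟨u, hu, hu'⟩ := S.hu
  obtain ⟨v, hv, hv'⟩ := S.hv
  have e1 : s S.θ0 = 0 := by
    apply tendsto_nhds_unique ((hs.tendsto S.θ0).comp hu)
    have : s ∘ u = fun _ => 0 := by
      funext n
      have := hDs (u n)
      rw [(hu' n).2] at this
      rcases mul_eq_zero.1 this with h | h
      · exact absurd ((S.hD0 _).1 h) (hu' n).1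
      · exact h
    rw [this]; exact tendsto_const_nhds
  have e2 : s S.θ0 = 1 := by
    apply tendsto_nhds_unique ((hs.tendsto S.θ0).comp hv)
    have : s ∘ v = fun _ => 1 := by
      funext n
      have := hDs (v n)
      rw [(hv' n).2] at this
      have hd : S.D (v n) ≠ 0 := fun h => (hv' n).1 ((S.hD0 _).1 h)
      simpa [hd] using this
    rw [this]; exact tendsto_const_nhds
  rw [e1] at e2
  exact zero_ne_one e2

lemma seg (k : ℤ) : ∃ x₁ x₂ : ↥(Icc S.a S.b), x₁ < x₂ ∧
    S.h ⁻¹' {(zIter S.α.toEquiv k S.θ0, S.γ (zIter S.α.toEquiv k S.θ0))} =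
      {zIter S.α.toEquiv k S.θ0} ×ˢ Icc x₁ x₂ := by
  set θ := zIter S.α.toEquiv k S.θ0 with hθ
  let z := S.sec (S.γ θ) θ
  have hz1 : z.1.1 = θ := S.sec_1 _ _
  have hz2 : z.1.2.1 = S.γ θ := S.sec_2 _ _
  have hZ : ∀ s : unitInterval,
      ((θ, S.γ θ, Function.update z.1.2.2 k s) : Θ × ↥(Icc S.a S.b) × (ℤ → unitInterval)) ∈ S.Z := by
    intro s j
    by_cases hj : j = k
    · subst hj
      apply S.R_any
      · rw [S.hG1]; show zIter _ _ θ = _; rw [hθ, zIter_neg_cancel]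
      · rw [S.hG1]; exact S.hGγ j θ
    · have := z.2 j
      rw [hz1, hz2] at this
      simpa [Function.update_of_ne hj] using this
  let z1 : ↥S.Z := ⟨_, hZ 0⟩
  let z2 : ↥S.Z := ⟨_, hZ 1⟩
  have hle12 : ∀ j, z1.1.2.2 j ≤ z2.1.2.2 j := by
    intro j
    by_cases hj : j = k
    · subst hj; simp [z1, z2]
    · simp [z1, z2, Function.update_of_ne hj]
  have hlt : S.e z1.1 < S.e z2.1 := by
    refine S.e_lt le_rfl hle12 ?_
    intro hh
    have := congrFun (congrArg Prod.snd hh) k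
    simp [z1, z2] at this
  have hoth : ∀ y : ↥S.Z, y.1.1 = θ → y.1.2.1 = S.γ θ → ∀ j, j ≠ k → y.1.2.2 j = z.1.2.2 j := by
    intro y hy1 hy2 j hj
    by_contra hne
    have := (S.sing_of_ne y.2 z.2 (hy1.trans hz1.symm) (hy2.trans hz2.symm) j hne).1
    rw [hy1] at this
    exact hj (S.Z_orbit_inj this.symm)
  refine ⟨(S.E z1).2, (S.E z2).2, ?_, ?_⟩
  · exact (S.Ev_lt_iff (z := z1) (z' := z2) rfl).2 hlt
  · ext p
    simp only [mem_preimage, mem_singleton_iff, mem_prod]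
    constructor
    · intro hp
      have hp1 : (S.E.symm p).1.1 = θ := congrArg Prod.fst hp
      have hp2 : (S.E.symm p).1.2.1 = S.γ θ := congrArg Prod.snd hp
      refine ⟨by rw [← S.Esymm_1, hp1], ?_, ?_⟩
      · show S.Ev z1 ≤ p.2
        rw [← S.Ev_symm, S.Ev_le_iff hp1.symm]
        refine S.e_le hp2.ge (fun j => ?_)
        by_cases hj : j = k
        · subst hj
          simp only [z1, Function.update_self]
          exact (S.E.symm p).1.2.2 j |>.2.1
        · rw [hoth _ hp1 hp2 j hj]
          simp [z1, Function.update_of_ne hj]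
      · show (p.2 : ℝ) ≤ S.Ev z2
        rw [← S.Ev_symm, S.Ev_le_iff hp1]
        refine S.e_le hp2.le (fun j => ?_)
        by_cases hj : j = k
        · subst hj
          simp only [z2, Function.update_self]
          exact (S.E.symm p).1.2.2 j |>.2.2
        · rw [hoth _ hp1 hp2 j hj]
          simp [z2, Function.update_of_ne hj]
    · rintro ⟨hp1, hp2, hp3⟩
      have hq1 : (S.E.symm p).1.1 = θ := by rw [S.Esymm_1, hp1]
      have i1 : S.Ev z1 ≤ p.2 := hp2
      have i2 : (p.2 : ℝ) ≤ S.Ev z2 := hp3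
      rw [← S.Ev_symm, S.Ev_le_iff hq1.symm] at i1
      rw [← S.Ev_symm, S.Ev_le_iff hq1] at i2
      have j1 := (S.le_of_e_le z1.2 (S.E.symm p).2 hq1.symm i1).1
      have j2 := (S.le_of_e_le (S.E.symm p).2 z2.2 hq1 i2).1
      exact Prod.ext hq1 (le_antisymm j2 j1)

lemma blowup : BlowUpConclusion (⇑S.α) S.f S.γ S.fhat S.h := by
  refine ⟨S.h_factor, S.h_1, S.fhat_forced, S.h_mono, ?_, ?_, S.no_curve⟩
  · intro p hp q hq heq
    exact S.h_inj heq (fun hh => absurd hh hp)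
  · refine ⟨range fun k : ℤ => (zIter S.α.toEquiv k S.θ0, S.γ (zIter S.α.toEquiv k S.θ0)), ?_,
      countable_range _, ?_, ?_⟩
    · rintro _ ⟨k, rfl⟩; rfl
    · rintro _ ⟨k, rfl⟩; exact S.seg k
    · rintro p ⟨hp1, hp2⟩
      obtain ⟨q, hq⟩ := S.h_factor.2.1 p
      have hq1 : q.1 = p.1 := by rw [← S.h_1, hq]
      refine ⟨q.2, ?_⟩
      ext r
      simp only [mem_preimage, mem_singleton_iff]
      have hqe : (p.1, q.2) = q := Prod.ext hq1.symm rfl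
      rw [hqe]
      constructor
      · intro hr
        apply S.h_inj (hr.trans hq.symm)
        intro _ k hk
        rw [hr] at hk
        apply hp2
        refine ⟨k, ?_⟩
        have : p.2 = S.γ p.1 := hp1
        refine Prod.ext hk.symm ?_
        rw [this, hk]
      · rintro rfl; exact hq

def K : Set (Θ × ↥(Icc S.a S.b)) := S.h ⁻¹' curveGraph S.γ

def off : Set Θ := {θ | ∀ k, θ ≠ zIter S.α.toEquiv k S.θ0}

lemma K_closed : IsClosed S.K := by
  have : IsClosed (curveGraph S.γ) := isClosed_eq continuous_snd (S.hγ.comp continuous_fst)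
  exact this.preimage S.h_factor.1

lemma h_of_K {p : Θ × ↥(Icc S.a S.b)} (hp : p ∈ S.K) : S.h p = (p.1, S.γ p.1) := by
  have : (S.h p).2 = S.γ (S.h p).1 := hp
  rw [S.h_1] at this
  exact Prod.ext (S.h_1 p) this

lemma K_uniq {p q : Θ × ↥(Icc S.a S.b)} (hp : p ∈ S.K) (hq : q ∈ S.K) (h1 : p.1 = q.1)
    (ho : p.1 ∈ S.off) : p = q := by
  apply S.h_inj
  · rw [S.h_of_K hp, S.h_of_K hq, h1]
  · intro _; rw [S.h_1]; exact ho

lemma fhat_K {p : Θ × ↥(Icc S.a S.b)} (hp : p ∈ S.K) : S.fhat p ∈ S.K := by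
  have : S.h (S.fhat p) = S.f (S.h p) := congrFun S.h_factor.2.2 p
  show S.h (S.fhat p) ∈ curveGraph S.γ
  rw [this, S.h_of_K hp, S.hγinv]
  rfl

lemma fhat_1 (p : Θ × ↥(Icc S.a S.b)) : (S.fhat p).1 = S.α p.1 := S.fhat_forced.2.1 p

lemma off_α {θ : Θ} : S.α θ ∈ S.off ↔ θ ∈ S.off := by
  constructor
  · intro h k hk
    apply h (1 + k)
    rw [zIter_add, zIter_one, ← hk]; rfl
  · intro h k hk
    apply h (-1 + k)
    rw [zIter_add, ← hk]
    have := zIter_neg_cancel S.α.toEquiv 1 θ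
    rw [zIter_one] at this
    exact this.symm

lemma off_dense (hperf : ∀ θ : Θ, (𝓝[≠] θ).NeBot) : Dense S.off := by
  have : S.off = ⋂ k, {zIter S.α.toEquiv k S.θ0}ᶜ := by
    ext θ; simp [off]
  rw [this]
  apply dense_iInter_of_isOpen (fun k => isOpen_compl_singleton)
  intro k
  have := hperf (zIter S.α.toEquiv k S.θ0)
  exact dense_compl_singleton _

def pt (θ : Θ) : Θ × ↥(Icc S.a S.b) := S.E (S.sec (S.γ θ) θ)

lemma pt_1 (θ : Θ) : (S.pt θ).1 = θ := S.sec_1 _ _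

lemma pt_K (θ : Θ) : S.pt θ ∈ S.K := by
  show S.h (S.E (S.sec (S.γ θ) θ)) ∈ curveGraph S.γ
  rw [S.h_E, S.sec_1, S.sec_2]; rfl

def M : Set (Θ × ↥(Icc S.a S.b)) := closure (S.pt '' S.off)

lemma M_K : S.M ⊆ S.K := by
  apply closure_minimal _ S.K_closed
  rintro _ ⟨θ, _, rfl⟩
  exact S.pt_K θ

lemma fhat_M : S.fhat '' S.M = S.M := by
  have hc : IsClosedMap S.fhat := S.fhat_cont.isClosedMap
  have key : ∀ θ ∈ S.off, S.fhat (S.pt θ) = S.pt (S.α θ) := by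
    intro θ hθ
    apply S.K_uniq (S.fhat_K (S.pt_K θ)) (S.pt_K _)
    · rw [S.fhat_1, S.pt_1, S.pt_1]
    · rw [S.fhat_1, S.pt_1, S.off_α]; exact hθ
  unfold M
  rw [← hc.closure_image_eq_of_continuous S.fhat_cont]
  congr 1
  ext p
  constructor
  · rintro ⟨_, ⟨θ, hθ, rfl⟩, rfl⟩
    exact ⟨S.α θ, S.off_α.2 hθ, (key θ hθ).symm⟩
  · rintro ⟨θ, hθ, rfl⟩
    have : S.α.symm θ ∈ S.off := S.off_α.1 (by simpa using hθ)
    exact ⟨_, ⟨S.α.symm θ, this, rfl⟩, by rw [key _ this]; simp⟩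

lemma proj_univ (hmin : MinimalHomeo S.α) (M' : Set (Θ × ↥(Icc S.a S.b))) (hne : M'.Nonempty)
    (hc : IsClosed M') (hinv : S.fhat '' M' ⊆ M') (θ : Θ) : ∃ p ∈ M', p.1 = θ := by
  have : Prod.fst '' M' = (univ : Set Θ) := by
    apply forward_min S.α hmin
    · exact (hc.isCompact.image continuous_fst).isClosed
    · exact hne.image _
    · rintro _ ⟨p, hp, rfl⟩
      exact ⟨S.fhat p, hinv ⟨p, hp, rfl⟩, S.fhat_1 p⟩
  have h2 : θ ∈ Prod.fst '' M' := by rw [this]; trivial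
  obtain ⟨p, hp, h⟩ := h2
  exact ⟨p, hp, h⟩

lemma M_nonempty (hperf : ∀ θ : Θ, (𝓝[≠] θ).NeBot) : S.M.Nonempty := by
  have : Nonempty Θ := ⟨S.θ0⟩
  obtain ⟨θ, hθ⟩ := (S.off_dense hperf).nonempty
  exact ⟨S.pt θ, subset_closure ⟨θ, hθ, rfl⟩⟩

lemma M_minimal (hmin : MinimalHomeo S.α) (hperf : ∀ θ : Θ, (𝓝[≠] θ).NeBot) :
    IsMinimalSet S.fhat S.M := by
  refine ⟨S.M_nonempty hperf, isClosed_closure, S.fhat_M, ?_⟩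
  intro M' hsub hne hc hinv
  apply Subset.antisymm hsub
  apply closure_minimal _ hc
  rintro _ ⟨θ, hθ, rfl⟩
  obtain ⟨p, hp, hp1⟩ := S.proj_univ hmin M' hne hc hinv θ
  have : p = S.pt θ := S.K_uniq (S.M_K (hsub hp)) (S.pt_K θ) (by rw [hp1, S.pt_1]) (by rw [hp1]; exact hθ)
  rwa [← this]

lemma M_AA (hap : AlmostPeriodicHomeo S.α) (hmin : MinimalHomeo S.α)
    (hperf : ∀ θ : Θ, (𝓝[≠] θ).NeBot) : IsAAMinimal S.fhat S.M := by
  refine ⟨S.M_minimal hmin hperf, fun hM => ⟨?_⟩⟩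
  refine { Y := Θ, g := S.α, hmap := fun p => p.1.1, factor := ⟨by fun_prop, fun θ => ?_, ?_⟩, a11 := ?_,
           ap := equicont S.α hap }
  · obtain ⟨p, hp, h1⟩ := S.proj_univ hmin S.M (S.M_nonempty hperf) isClosed_closure S.fhat_M.subset θ
    exact ⟨⟨p, hp⟩, h1⟩
  · funext p
    exact S.fhat_1 p.1
  · apply (S.off_dense hperf).mono
    intro θ hθ
    refine ⟨⟨S.pt θ, subset_closure ⟨θ, hθ, rfl⟩⟩, S.pt_1 θ, ?_⟩
    rintro ⟨p, hp⟩ (hp1 : p.1 = θ)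
    apply Subtype.ext
    exact S.K_uniq (S.M_K hp) (S.pt_K θ) (by rw [hp1, S.pt_1]) (by rw [hp1]; exact hθ)

lemma M_fib_dist {p q : Θ × ↥(Icc S.a S.b)} (hp : p ∈ S.K) (hq : q ∈ S.K) (j : ℤ)
    (hp1 : p.1 = zIter S.α.toEquiv j S.θ0) (hq1 : q.1 = zIter S.α.toEquiv j S.θ0) :
    dist p q ≤ w j := by
  set z := S.E.symm p with hz
  set z' := S.E.symm q with hz'
  have hk := congrArg Prod.snd (S.h_of_K hp)
  have hk' := congrArg Prod.snd (S.h_of_K hq)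
  change z.1.2.1 = S.γ p.1 at hk
  change z'.1.2.1 = S.γ q.1 at hk'
  have h1 : z.1.1 = z'.1.1 := by rw [hz, hz', S.Esymm_1, S.Esymm_1, hp1, hq1]
  have h2 : z.1.2.1 = z'.1.2.1 := by rw [hk, hk', hp1, hq1]
  have hoth : ∀ i, i ≠ j → z.1.2.2 i = z'.1.2.2 i := by
    intro i hi
    by_contra hne
    have := (S.sing_of_ne z.2 z'.2 h1 h2 i hne).1
    rw [hz, S.Esymm_1, hp1] at this
    exact hi (S.Z_orbit_inj this.symm)
  have hdiff : S.e z'.1 - S.e z.1 = w j * ((z'.1.2.2 j : ℝ) - z.1.2.2 j) := by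
    unfold e
    rw [h2, add_sub_add_left_eq_sub, ← (e_summable _).tsum_sub (e_summable _), tsum_eq_single j]
    · ring
    · intro i hi; rw [hoth i hi]; ring
  have habs : |S.e z'.1 - S.e z.1| ≤ w j := by
    rw [hdiff, abs_mul, abs_of_pos (w_pos j)]
    apply mul_le_of_le_one_right (w_pos j).le
    have a1 := (z'.1.2.2 j).2
    have a2 := (z.1.2.2 j).2
    rw [abs_le]
    constructor <;> linarith [a1.1, a1.2, a2.1, a2.2]
  have hg := S.gap_pos z.1.1
  have hba : 0 < S.b - S.a := sub_pos.2 S.hab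
  have hEv : |S.Ev z' - S.Ev z| ≤ |S.e z'.1 - S.e z.1| := by
    rw [S.Ev_diff h1, abs_mul, abs_div, abs_of_pos hg, abs_of_pos hba, ← mul_div_assoc,
      div_le_iff₀ hg, mul_comm]
    exact mul_le_mul_of_nonneg_left (S.hi_lo _) (abs_nonneg _)
  rw [hz, hz', S.Ev_symm, S.Ev_symm] at hEv
  rw [Prod.dist_eq, hp1, hq1, dist_self, dist_comm, Subtype.dist_eq, Real.dist_eq]
  exact max_le (w_pos j).le (hEv.trans habs)

lemma preimages (n : ℕ) {p : Θ × ↥(Icc S.a S.b)} (hp : p ∈ S.M) :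
    ∃ q ∈ S.M, S.fhat^[n] q = p ∧ q.1 = zIter S.α.toEquiv (-(n:ℤ)) p.1 := by
  induction n generalizing p with
  | zero => exact ⟨p, hp, rfl, by simp [zIter_zero]⟩
  | succ n ih =>
    obtain ⟨q, hq, h1, h2⟩ := ih hp
    rw [← S.fhat_M] at hq
    obtain ⟨r, hr, rfl⟩ := hq
    refine ⟨r, hr, by rw [iterate_succ_apply, h1], ?_⟩
    rw [S.fhat_1] at h2
    have := zIter_neg_cancel S.α.toEquiv 1 r.1
    rw [zIter_one] at this
    rw [← this]
    change zIter S.α.toEquiv (-1) (S.α r.1) = _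
    rw [h2, ← zIter_add]
    congr 1; push_cast; ring

lemma M_not_AP (hmin : MinimalHomeo S.α) (hperf : ∀ θ : Θ, (𝓝[≠] θ).NeBot) :
    ¬ IsAPMinimal S.fhat S.M := by
  rintro ⟨hMin, hAP⟩
  have hM : MapsTo S.fhat S.M S.M := by
    rw [mapsTo_iff_image_subset]; exact S.fhat_M.subset
  have hAP := hAP hM
  have huniq : ∀ p ∈ S.M, ∀ q ∈ S.M, p.1 = q.1 → p = q := by
    intro p hp q hq h1
    by_cases ho : p.1 ∈ S.off
    · exact S.K_uniq (S.M_K hp) (S.M_K hq) h1 ho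
    have : ∃ m, p.1 = zIter S.α.toEquiv m S.θ0 := by
      by_contra hc
      push Not at hc
      exact ho hc
    obtain ⟨m, hm⟩ := this
    by_contra hne
    obtain ⟨δ, hδ, hd⟩ := hAP (dist p q) (dist_pos.2 hne)
    have hlim : Tendsto (fun n : ℕ => w (m - n)) atTop (𝓝 0) := by
      have hinj : Injective fun n : ℕ => m - (n : ℤ) := by
        intro i j hij
        simpa using hij
      have := w_sum.tendsto_cofinite_zero.comp hinj.tendsto_cofinite
      rwa [Nat.cofinite_eq_atTop] at this
    obtain ⟨n, hn⟩ := (hlim.eventually (gt_mem_nhds hδ)).exists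
    obtain ⟨p', hp', hpi, hp1⟩ := S.preimages n hp
    obtain ⟨q', hq', hqi, hq1⟩ := S.preimages n hq
    rw [← h1] at hq1
    rw [hm, ← zIter_add] at hp1 hq1
    have hdist := S.M_fib_dist (S.M_K hp') (S.M_K hq') _ hp1 hq1
    rw [show -(n:ℤ) + m = m - n by ring] at hdist
    have hit : ∀ x : ↥S.M, ((restrictMap hM)^[n] x).1 = S.fhat^[n] x.1 := by
      intro x
      unfold restrictMap
      rw [MapsTo.iterate_restrict]; rfl
    have := hd ⟨p', hp'⟩ ⟨q', hq'⟩ (lt_of_le_of_lt hdist hn) n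
    rw [Subtype.dist_eq, hit, hit, hpi, hqi] at this
    exact lt_irrefl _ this
  choose c hc hc1 using S.proj_univ hmin S.M (S.M_nonempty hperf) isClosed_closure S.fhat_M.subset
  have hgr : curveGraph (fun θ => (c θ).2) = S.M := by
    ext p
    constructor
    · intro (hp : p.2 = (c p.1).2)
      have : p = c p.1 := Prod.ext (hc1 _).symm hp
      rw [this]; exact hc _
    · intro hp
      have : p = c p.1 := huniq p hp _ (hc _) (hc1 _).symm
      exact congrArg Prod.snd this
  have hcont : Continuous fun θ => (c θ).2 := by
    apply cont_of_closed_graph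
    have : IsClosed (curveGraph (fun θ => (c θ).2)) := by rw [hgr]; exact isClosed_closure
    exact this
  refine S.no_curve _ hcont ?_
  rw [hgr]; exact S.M_K

lemma pinched (hperf : ∀ θ : Θ, (𝓝[≠] θ).NeBot) : Pinched (S.h ⁻¹' curveGraph S.γ) := by
  have : Nonempty Θ := ⟨S.θ0⟩
  obtain ⟨θ, hθ⟩ := (S.off_dense hperf).nonempty
  refine ⟨θ, (S.pt θ).2, ?_, ?_⟩
  · have : (θ, (S.pt θ).2) = S.pt θ := Prod.ext (S.pt_1 θ).symm rfl
    show (θ, (S.pt θ).2) ∈ S.h ⁻¹' curveGraph S.γ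
    rw [this]; exact S.pt_K θ
  · intro x hx
    exact congrArg Prod.snd (S.K_uniq hx (S.pt_K θ) (S.pt_1 θ).symm hθ)

end BD

/-- the blow-up construction over an almost periodic minimal
homeomorphism of an infinite compact metric space. -/
theorem stmt0 {Θ : Type} [MetricSpace Θ] [CompactSpace Θ] [Infinite Θ]
    (α : Θ ≃ₜ Θ) (hap : AlmostPeriodicHomeo α) (hmin : MinimalHomeo α)
    {I : Set ℝ} (hIcomp : IsCompact I) (hIconn : I.OrdConnected)
    (f : Θ × ↥I → Θ × ↥I) (hf : ForcedIncreasing (⇑α) f)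
    (γ : Θ → ↥I) (hγc : Continuous γ) (hγint : ∀ θ : Θ, (γ θ : ℝ) ∈ interior I)
    (hγinv : ∀ θ : Θ, f (θ, γ θ) = (α θ, γ (α θ))) :
    ∃ fhat h : Θ × ↥I → Θ × ↥I,
      BlowUpConclusion (⇑α) f γ fhat h ∧
      Pinched (h ⁻¹' curveGraph γ) ∧
      ∃ M : Set (Θ × ↥I), M ⊆ h ⁻¹' curveGraph γ ∧
        IsAAMinimal fhat M ∧ ¬ IsAPMinimal fhat M := by
  obtain ⟨θ0⟩ : Nonempty Θ := inferInstance
  have hne : I.Nonempty := ⟨γ θ0, (γ θ0).2⟩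
  obtain ⟨a, b, rfl⟩ : ∃ a b : ℝ, I = Icc a b :=
    ⟨_, _, eq_Icc_of_connected_compact ⟨hne, hIconn.isPreconnected⟩ hIcomp⟩
  simp only [interior_Icc] at hγint
  have hab : a < b := (hγint θ0).1.trans (hγint θ0).2
  have hperf := perfect_of_minimal α hmin
  have := hperf θ0
  obtain ⟨A, D, hA, hD, hA0, hAD, hD0, hu, hv⟩ := osc_exists θ0
  obtain ⟨G, hG, hG1, hGm, hGf, hGγ, hG0⟩ := ext_homeo_iter α hab f hf γ hγinv
  let S : BD Θ :=
    { α := α, a := a, b := b, hab := hab, f := f, hf := hf, γ := γ, hγ := hγc,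
      hγa := fun θ => (hγint θ).1, hγb := fun θ => (hγint θ).2, hγinv := hγinv, G := G, hG := hG,
      hG1 := hG1, hGm := hGm, hGf := hGf, hGγ := hGγ, hG0 := hG0, θ0 := θ0, A := A, D := D,
      hA := hA, hD := hD, hA0 := hA0, hAD := hAD, hD0 := hD0, hu := hu, hv := hv,
      hper := aperiodic α hmin θ0 }
  exact ⟨S.fhat, S.h, S.blowup, S.pinched hperf, S.M, S.M_K, S.M_AA hap hmin hperf,
    S.M_not_AP hmin hperf⟩

end
end

section
/- Let f : 𝔸 → 𝔸 (𝔸 = T¹ × I) be a quasiperiodically forced increasing interval map, driven by an irrational rotation R of T¹, and let Γ = {(θ, γ(θ)) : θ ∈ T¹} be an f-invariant curve with γ : T¹ → int I continuous. Then there exists a topological extension f̂ : 𝔸 → 𝔸 of f with factor map h from f̂ to f of the form h(θ,x) = (θ, h_θ(x)) such that: (i) f̂ is a quasiperiodically forced increasing interval map; (ii) all fibre maps h_θ are non-decreasing; (iii) h is injective on the complement of h^{-1}(Γ); (iv) for a countable set of points of Γ the h-preimage is a non-degenerate vertical segment, and for all other points of Γ it is a singleton; (v) h^{-1}(Γ)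 contains no graph of a continuous curve η : T¹ → I; (vi) h^{-1}(Γ) is pinched and contains an almost automorphic minimal set of f̂ which is not almost periodic. -/
open Set Function MeasureTheory

noncomputable section

/-! ### Orbit on the circle -/

/-- The orbit of `0` under the rotation. -/
def orb (ρ : ℝ) (n : ℤ) : T1 := (((n : ℝ) * ρ : ℝ) : T1)

theorem orb_zero (ρ : ℝ) : orb ρ 0 = 0 := by simp [orb]

theorem orb_succ (ρ : ℝ) (n : ℤ) : orb ρ (n + 1) = orb ρ n + (ρ : T1) := by
  unfold orb
  rw [← AddCircle.coe_add]
  congr 1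
  push_cast
  ring

theorem orb_inj {ρ : ℝ} (hρ : Irrational ρ) {m n : ℤ} (h : orb ρ m = orb ρ n) : m = n := by
  unfold orb at h
  rw [← sub_eq_zero, ← AddCircle.coe_sub, AddCircle.coe_eq_zero_iff] at h
  obtain ⟨k, hk⟩ := h
  by_contra hne
  have h1 : ((m : ℝ) - n) ≠ 0 := by
    rw [sub_ne_zero]
    exact_mod_cast hne
  apply hρ
  refine ⟨(k : ℚ) / ((m : ℚ) - n), ?_⟩
  push_cast
  rw [div_eq_iff h1]
  simp at hk
  linarith

theorem orb_compl_dense (ρ : ℝ) : Dense (range (orb ρ))ᶜ := by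
  have hc : ((fun x : ℝ => (x : T1)) ⁻¹' (range (orb ρ))).Countable := by
    have : ((fun x : ℝ => (x : T1)) ⁻¹' (range (orb ρ))) ⊆
        range (fun q : ℤ × ℤ => (q.1 : ℝ) * ρ + q.2) := by
      rintro x ⟨n, hn⟩
      have hn' : (x : T1) = (((n : ℝ) * ρ : ℝ) : T1) := hn.symm
      rw [← sub_eq_zero, ← AddCircle.coe_sub, AddCircle.coe_eq_zero_iff] at hn'
      obtain ⟨k, hk⟩ := hn'
      refine ⟨(n, k), ?_⟩
      simp at hk ⊢
      linarith
    exact (countable_range _).mono this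
  have hd := hc.dense_compl ℝ
  have hs : DenseRange (fun x : ℝ => (x : T1)) :=
    (QuotientAddGroup.mk_surjective (s := AddSubgroup.zmultiples (1 : ℝ))).denseRange
  have := hs.dense_image (AddCircle.continuous_mk' 1) hd
  refine this.mono ?_
  rintro _ ⟨x, hx, rfl⟩
  exact hx

theorem rot_invariant_closed {ρ : ℝ} (hρ : Irrational ρ) {E : Set T1} (hne : E.Nonempty)
    (hc : IsClosed E) (hE : ∀ θ ∈ E, θ + (ρ : T1) ∈ E) : E = univ := by
  obtain ⟨θ, hθ⟩ := hne
  have h1 : DenseRange (fun n : ℤ => n • (ρ : T1)) := by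
    rw [AddCircle.denseRange_zsmul_coe_iff]
    simpa using hρ
  have h2 : DenseRange (fun n : ℕ => n • (ρ : T1)) := denseRange_zsmul_iff_nsmul.1 h1
  have h3 : ∀ n : ℕ, θ + n • (ρ : T1) ∈ E := by
    intro n
    induction n with
    | zero => simpa using hθ
    | succ k ih =>
      have := hE _ ih
      rw [succ_nsmul, ← add_assoc]
      exact this
  have h4 : DenseRange (fun n : ℕ => θ + n • (ρ : T1)) :=
    (Homeomorph.addLeft θ).surjective.denseRange.comp h2 (Homeomorph.addLeft θ).continuous
  apply eq_univ_of_univ_subset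
  rw [← h4.closure_range]
  exact hc.closure_subset_iff.2 (by rintro _ ⟨n, rfl⟩; exact h3 n)

/-- The asymmetry function on the circle. -/
def tau (θ : T1) : ℝ := ‖θ + ((1 / 4 : ℝ) : T1)‖ - ‖θ - ((1 / 4 : ℝ) : T1)‖

theorem tau_zero : tau 0 = 0 := by simp [tau]

theorem tau_cont : Continuous tau := by unfold tau; fun_prop

theorem norm_T1 {t : ℝ} (ht : |t| ≤ 1 / 2) : ‖(t : T1)‖ = |t| := by
  rw [AddCircle.norm_coe_eq_abs_iff]
  · simpa using ht
  · norm_num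

theorem tau_coe {t : ℝ} (ht : |t| ≤ 1 / 4) : tau (t : T1) = 2 * t := by
  unfold tau
  rw [← AddCircle.coe_add, ← AddCircle.coe_sub]
  rw [abs_le] at ht
  rw [norm_T1 (by rw [abs_le]; constructor <;> linarith [ht.1, ht.2]),
    norm_T1 (by rw [abs_le]; constructor <;> linarith [ht.1, ht.2]),
    abs_of_nonneg (by linarith [ht.1]), abs_of_nonpos (by linarith [ht.2])]
  ring

theorem tau_pos_mem (ρ : ℝ) : (0 : T1) ∈ closure ({θ : T1 | ‖θ‖ < tau θ} ∩ (range (orb ρ))ᶜ) := by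
  have hopen : IsOpen {θ : T1 | ‖θ‖ < tau θ} := isOpen_lt continuous_norm tau_cont
  rw [(orb_compl_dense ρ).open_subset_closure_inter hopen |> fun h => (show closure ({θ : T1 | ‖θ‖ < tau θ} ∩ (range (orb ρ))ᶜ) = closure {θ : T1 | ‖θ‖ < tau θ} from
    (closure_mono inter_subset_left).antisymm (closure_minimal h isClosed_closure))]
  have h0 : (0 : ℝ) ∈ closure (Ioo (0 : ℝ) (1 / 4)) := by
    rw [closure_Ioo (by norm_num)]; constructor <;> norm_num
  have := (AddCircle.continuous_mk' (1 : ℝ)).continuousAt.continuousWithinAt.mem_closure_image h0 (f := ((↑) : ℝ → T1))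
  refine closure_mono ?_ this
  rintro _ ⟨t, ht, rfl⟩
  have h1 : |t| ≤ 1 / 4 := by rw [abs_le]; constructor <;> linarith [ht.1, ht.2]
  show ‖(t : T1)‖ < tau (t : T1)
  rw [tau_coe h1, norm_T1 (by linarith), abs_of_pos ht.1]
  linarith [ht.1]

theorem tau_neg_mem (ρ : ℝ) : (0 : T1) ∈ closure ({θ : T1 | tau θ < -‖θ‖} ∩ (range (orb ρ))ᶜ) := by
  have hopen : IsOpen {θ : T1 | tau θ < -‖θ‖} := isOpen_lt tau_cont continuous_norm.neg
  rw [(orb_compl_dense ρ).open_subset_closure_inter hopen |> fun h => (show closure ({θ : T1 | tau θ < -‖θ‖} ∩ (range (orb ρ))ᶜ) = closure {θ : T1 | tau θ < -‖θ‖} from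
    (closure_mono inter_subset_left).antisymm (closure_minimal h isClosed_closure))]
  have h0 : (0 : ℝ) ∈ closure (Ioo (-(1 / 4) : ℝ) 0) := by
    rw [closure_Ioo (by norm_num)]; constructor <;> norm_num
  have := (AddCircle.continuous_mk' (1 : ℝ)).continuousAt.continuousWithinAt.mem_closure_image h0 (f := ((↑) : ℝ → T1))
  refine closure_mono ?_ this
  rintro _ ⟨t, ht, rfl⟩
  have h1 : |t| ≤ 1 / 4 := by rw [abs_le]; constructor <;> linarith [ht.1, ht.2]
  show tau (t : T1) < -‖(t : T1)‖
  rw [tau_coe h1, norm_T1 (by linarith), abs_of_neg ht.2]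
  linarith [ht.2]

/-! ### The relation defining the blow-up -/

/-- The closed monotone relation `s = clamp (v / d)`. -/
def BRel (d v s : ℝ) : Prop := (1 ≤ s ∨ v ≤ s * d) ∧ (s ≤ -1 ∨ s * d ≤ v)

theorem BRel_exists {d : ℝ} (hd : 0 ≤ d) (v : ℝ) : ∃ s : Icc (-1 : ℝ) 1, BRel d v s := by
  by_cases h1 : d ≤ v
  · exact ⟨⟨1, by norm_num⟩, Or.inl le_rfl, Or.inr (by simpa using h1)⟩
  by_cases h2 : v ≤ -d
  · exact ⟨⟨-1, by norm_num⟩, Or.inr (by simpa using h2), Or.inl le_rfl⟩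
  push Not at h1 h2
  have hd' : 0 < d := by linarith
  refine ⟨⟨v / d, ?_, ?_⟩, Or.inr ?_, Or.inr ?_⟩
  · rw [le_div_iff₀ hd']; linarith
  · rw [div_le_iff₀ hd']; linarith
  · simp [div_mul_cancel₀ _ hd'.ne']
  · simp [div_mul_cancel₀ _ hd'.ne']

theorem BRel_mono {d v v' s s' : ℝ} (hd : 0 ≤ d) (h1 : -1 ≤ s') (h2 : s ≤ 1)
    (h : BRel d v s) (h' : BRel d v' s') (hv : v < v') : s ≤ s' := by
  by_contra hlt
  push Not at hlt
  have a1 : s * d ≤ v := h.2.resolve_left (by linarith)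
  have a2 : v' ≤ s' * d := h'.1.resolve_left (by linarith)
  nlinarith

theorem BRel_uniq {d v s s' : ℝ} (hd : 0 ≤ d) (h1 : -1 ≤ s) (h2 : s' ≤ 1)
    (h : BRel d v s) (h' : BRel d v s') (hv : s < s') : d = 0 ∧ v = 0 := by
  have a1 : v ≤ s * d := h.1.resolve_left (by linarith)
  have a2 : s' * d ≤ v := h'.2.resolve_left (by linarith)
  have : d = 0 := by nlinarith
  subst this
  constructor <;> linarith

theorem BRel_convex {d v s s' t : ℝ} (hd : 0 ≤ d) (h : BRel d v s) (h' : BRel d v s')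
    (h1 : s ≤ t) (h2 : t ≤ s') : BRel d v t := by
  constructor
  · rcases h.1 with h | h
    · left; linarith
    · right; nlinarith
  · rcases h'.2 with h | h
    · left; linarith
    · right; nlinarith

theorem BRel_zero (s : ℝ) : BRel 0 0 s := ⟨Or.inr (by simp), Or.inr (by simp)⟩

theorem BRel_pos {d v s : ℝ} (h2 : s ≤ 1) (hd : 0 ≤ d) (h : BRel d v s) (hv : d < v) : s = 1 := by
  rcases h.1 with h | h
  · linarith
  · nlinarith

theorem BRel_neg {d v s : ℝ} (h2 : -1 ≤ s) (hd : 0 ≤ d) (h : BRel d v s) (hv : v < -d) : s = -1 := by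
  rcases h.2 with h | h
  · linarith
  · nlinarith

/-! ### Transported fibre coordinates -/

/-- Admissible fibre coordinate. -/
def GoodV {I : Set ℝ} (γ : T1 → ↥I) (V : T1 × ↥I → ℝ) : Prop :=
  Continuous V ∧ (∀ θ, StrictMono fun y : ↥I => V (θ, y)) ∧ ∀ θ, V (θ, γ θ) = 0

theorem good_down {I : Set ℝ} {ρ : ℝ} {f : T1 × ↥I → T1 × ↥I}
    (hf : ForcedIncreasing (fun θ : T1 => θ + (ρ : T1)) f) {γ : T1 → ↥I}
    (hγinv : ∀ θ : T1, f (θ, γ θ) = (θ + (ρ : T1), γ (θ + (ρ : T1))))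
    {V : T1 × ↥I → ℝ} (hV : GoodV γ V) : GoodV γ (V ∘ f) := by
  refine ⟨hV.1.comp hf.1, ?_, ?_⟩
  · intro θ y y' h
    have h1 : f (θ, y) = (θ + (ρ : T1), (f (θ, y)).2) := Prod.ext (hf.2.1 _) rfl
    have h2 : f (θ, y') = (θ + (ρ : T1), (f (θ, y')).2) := Prod.ext (hf.2.1 _) rfl
    show V (f (θ, y)) < V (f (θ, y'))
    rw [h1, h2]
    exact hV.2.1 _ (hf.2.2 θ h)
  · intro θ
    show V (f (θ, γ θ)) = 0
    rw [hγinv]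
    exact hV.2.2 _

theorem f_inj {I : Set ℝ} {ρ : ℝ} {f : T1 × ↥I → T1 × ↥I}
    (hf : ForcedIncreasing (fun θ : T1 => θ + (ρ : T1)) f) : Injective f := by
  rintro ⟨θ, y⟩ ⟨θ', y'⟩ h
  have h1 : θ = θ' := by
    have := congrArg Prod.fst h
    rw [hf.2.1, hf.2.1] at this
    exact add_right_cancel this
  subst h1
  have h2 := (hf.2.2 θ).injective (congrArg Prod.snd h)
  rw [h2]

theorem clamp_diff {l u y y' : ℝ} (hl : l ≤ u) (hy : y ≤ y') :
    y - max l (min u y) ≤ y' - max l (min u y') := by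
  rcases le_total u y with a | a <;> rcases le_total u y' with b | b <;>
    rcases le_total l y with a' | a' <;> rcases le_total l y' with b' | b' <;>
    simp only [min_eq_left, min_eq_right, max_eq_left, max_eq_right, *] <;> linarith

theorem good_up {I : Set ℝ} [CompactSpace ↥I] [PreconnectedSpace ↥I] {ρ : ℝ}
    {f : T1 × ↥I → T1 × ↥I}
    (hf : ForcedIncreasing (fun θ : T1 => θ + (ρ : T1)) f) {γ : T1 → ↥I}
    (hγinv : ∀ θ : T1, f (θ, γ θ) = (θ + (ρ : T1), γ (θ + (ρ : T1))))
    {A B : ↥I} (hA : ∀ x, A ≤ x) (hB : ∀ x, x ≤ B)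
    {V : T1 × ↥I → ℝ} (hV : GoodV γ V) : ∃ V', GoodV γ V' ∧ V' ∘ f = V := by
  classical
  have hemb : Topology.IsClosedEmbedding f := hf.1.isClosedEmbedding (f_inj hf)
  let e := hemb.isEmbedding.toHomeomorph
  -- clamping onto the range
  let lo : T1 → ↥I := fun θ => (f (θ - (ρ : T1), A)).2
  let hi : T1 → ↥I := fun θ => (f (θ - (ρ : T1), B)).2
  have hloc : Continuous lo := by
    have := hf.1
    fun_prop
  have hhic : Continuous hi := by
    have := hf.1
    fun_prop
  have hlh : ∀ θ, lo θ ≤ hi θ := fun θ => (hf.2.2 _).monotone (hA B)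
  let c : T1 × ↥I → T1 × ↥I := fun q => (q.1, max (lo q.1) (min (hi q.1) q.2))
  have hcc : Continuous c := by
    refine continuous_fst.prodMk ?_
    exact (hloc.comp continuous_fst).max ((hhic.comp continuous_fst).min continuous_snd)
  have hfs : ∀ θ y, f (θ - (ρ : T1), y) = (θ, (f (θ - (ρ : T1), y)).2) := by
    intro θ y
    refine Prod.ext ?_ rfl
    rw [hf.2.1]
    simp
  have hcr : ∀ q, c q ∈ range f := by
    intro q
    have hcont : Continuous (fun y : ↥I => (f (q.1 - (ρ : T1), y)).2) := by
      have := hf.1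
      fun_prop
    have hmem : (c q).2 ∈ Icc (lo q.1) (hi q.1) :=
      ⟨le_max_left _ _, max_le (hlh _) (min_le_left _ _)⟩
    obtain ⟨y, hy⟩ := mem_range_of_exists_le_of_exists_ge hcont ⟨A, hmem.1⟩ ⟨B, hmem.2⟩
    refine ⟨(q.1 - (ρ : T1), y), ?_⟩
    rw [hfs]
    exact Prod.ext rfl hy
  let g : T1 × ↥I → T1 × ↥I := fun q => e.symm ⟨c q, hcr q⟩
  have hgc : Continuous g := e.symm.continuous.comp (hcc.subtype_mk _)
  have hfg : ∀ q, f (g q) = c q := by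
    intro q
    have := congrArg Subtype.val (e.apply_symm_apply ⟨c q, hcr q⟩)
    exact this
  have hg1 : ∀ q, (g q).1 = q.1 - (ρ : T1) := by
    intro q
    have := congrArg Prod.fst (hfg q)
    rw [hf.2.1] at this
    exact eq_sub_of_add_eq this
  have hcf : ∀ p, c (f p) = f p := by
    intro p
    have h1 : (f p).1 - (ρ : T1) = p.1 := by rw [hf.2.1]; simp
    have hl : lo (f p).1 ≤ (f p).2 := by
      show (f ((f p).1 - (ρ : T1), A)).2 ≤ _
      rw [h1]
      exact (hf.2.2 p.1).monotone (hA p.2)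
    have hh : (f p).2 ≤ hi (f p).1 := by
      show _ ≤ (f ((f p).1 - (ρ : T1), B)).2
      rw [h1]
      exact (hf.2.2 p.1).monotone (hB p.2)
    refine Prod.ext rfl ?_
    show max _ (min _ _) = _
    rw [min_eq_right hh, max_eq_right hl]
  have hgf : ∀ p, g (f p) = p := fun p => f_inj hf (by rw [hfg, hcf])
  have key : (fun q => V (g q) + ((q.2 : ℝ) - ((c q).2 : ℝ))) ∘ f = V := by
    funext p
    simp [hgf, hcf]
  refine ⟨fun q => V (g q) + ((q.2 : ℝ) - ((c q).2 : ℝ)), ⟨?_, ?_, ?_⟩, key⟩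
  · have := hV.1
    fun_prop
  · intro θ y y' hy
    have hcle : (c (θ, y)).2 ≤ (c (θ, y')).2 :=
      max_le_max le_rfl (min_le_min le_rfl hy.le)
    have hdiff : (y : ℝ) - ((c (θ, y)).2 : ℝ) ≤ (y' : ℝ) - ((c (θ, y')).2 : ℝ) := by
      have hy' : (y : ℝ) < y' := hy
      have hl : (lo θ : ℝ) ≤ hi θ := hlh θ
      have e1 : ∀ y : ↥I, ((c (θ, y)).2 : ℝ) = max (lo θ : ℝ) (min (hi θ : ℝ) y) := by
        intro y
        have hm : Monotone (Subtype.val : ↥I → ℝ) := fun _ _ h => h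
        show ((max (lo θ) (min (hi θ) y) : ↥I) : ℝ) = _
        rw [hm.map_max, hm.map_min]
      rw [e1, e1]
      exact clamp_diff hl hy'.le
    have hgs : ∀ y, g (θ, y) = (θ - (ρ : T1), (g (θ, y)).2) := fun y => Prod.ext (hg1 _) rfl
    have hfgs : ∀ y, (f (θ - (ρ : T1), (g (θ, y)).2)).2 = (c (θ, y)).2 := by
      intro y
      rw [← hgs, hfg]
    show V (g (θ, y)) + ((y : ℝ) - ((c (θ, y)).2 : ℝ)) < V (g (θ, y')) + ((y' : ℝ) - ((c (θ, y')).2 : ℝ))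
    rcases hcle.lt_or_eq with hlt | heq
    · have : (g (θ, y)).2 < (g (θ, y')).2 := by
        rw [← (hf.2.2 (θ - (ρ : T1))).lt_iff_lt]
        show (f (θ - (ρ : T1), (g (θ, y)).2)).2 < (f (θ - (ρ : T1), (g (θ, y')).2)).2
        rw [hfgs, hfgs]
        exact hlt
      have h3 : V (g (θ, y)) < V (g (θ, y')) := by
        rw [hgs, hgs y']
        exact hV.2.1 _ this
      linarith
    · have : g (θ, y) = g (θ, y') := by
        apply f_inj hf
        rw [hfg, hfg]
        exact Prod.ext rfl heq
      rw [this, heq]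
      have hy' : (y : ℝ) < y' := hy
      linarith
  · intro θ
    have h1 := hγinv (θ - (ρ : T1))
    rw [sub_add_cancel] at h1
    have := congrFun key (θ - (ρ : T1), γ (θ - (ρ : T1)))
    rw [hV.2.2, comp_apply, h1] at this
    exact this

theorem exists_V {I : Set ℝ} [CompactSpace ↥I] [PreconnectedSpace ↥I] {ρ : ℝ}
    {f : T1 × ↥I → T1 × ↥I}
    (hf : ForcedIncreasing (fun θ : T1 => θ + (ρ : T1)) f) {γ : T1 → ↥I} (hγc : Continuous γ)
    (hγinv : ∀ θ : T1, f (θ, γ θ) = (θ + (ρ : T1), γ (θ + (ρ : T1))))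
    {A B : ↥I} (hA : ∀ x, A ≤ x) (hB : ∀ x, x ≤ B) :
    ∃ V : ℤ → T1 × ↥I → ℝ, (∀ n, GoodV γ (V n)) ∧ ∀ n p, V (n + 1) (f p) = V n p := by
  choose! up hup1 hup2 using fun V (hV : GoodV γ V) => good_up hf hγinv hA hB hV
  let V0 : T1 × ↥I → ℝ := fun p => (p.2 : ℝ) - γ p.1
  have hV0 : GoodV γ V0 := by
    refine ⟨by fun_prop, ?_, ?_⟩
    · intro θ y y' h
      have h' : (y : ℝ) < y' := h
      show (y : ℝ) - γ θ < y' - γ θ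
      linarith
    · intro θ
      simp [V0]
  have hu : ∀ k, GoodV γ (up^[k] V0) := by
    intro k
    induction k with
    | zero => exact hV0
    | succ k ih => rw [iterate_succ_apply']; exact hup1 _ ih
  have hd : ∀ k, GoodV γ ((fun V => V ∘ f)^[k] V0) := by
    intro k
    induction k with
    | zero => exact hV0
    | succ k ih => rw [iterate_succ_apply']; exact good_down hf hγinv ih
  let V : ℤ → T1 × ↥I → ℝ := fun n =>
    match n with
    | Int.ofNat k => up^[k] V0
    | Int.negSucc k => (fun V => V ∘ f)^[k + 1] V0
  refine ⟨V, ?_, ?_⟩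
  · intro n
    match n with
    | Int.ofNat k => exact hu k
    | Int.negSucc k => exact hd (k + 1)
  · intro n p
    match n with
    | Int.ofNat k =>
      show up^[k + 1] V0 (f p) = up^[k] V0 p
      rw [iterate_succ_apply']
      exact congrFun (hup2 _ (hu k)) p
    | Int.negSucc 0 => rfl
    | Int.negSucc (k + 1) =>
      show (fun V => V ∘ f)^[k + 1] V0 (f p) = (fun V => V ∘ f)^[k + 1 + 1] V0 p
      rw [iterate_succ_apply' _ (k + 1)]
      rfl

/-! ### The abstract blown-up space -/

/-- All the data entering the construction. -/
structure BData (I : Set ℝ) where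
  (ρ : ℝ)
  (hρ : Irrational ρ)
  (f : T1 × ↥I → T1 × ↥I)
  (hf : ForcedIncreasing (fun θ : T1 => θ + (ρ : T1)) f)
  (γ : T1 → ↥I)
  (hγc : Continuous γ)
  (hγinv : ∀ θ : T1, f (θ, γ θ) = (θ + (ρ : T1), γ (θ + (ρ : T1))))
  (A B : ↥I)
  (hA : ∀ x, A ≤ x)
  (hB : ∀ x, x ≤ B)
  (hAγ : ∀ θ, A < γ θ)
  (hγB : ∀ θ, γ θ < B)
  (V : ℤ → T1 × ↥I → ℝ)
  (hV : ∀ n, GoodV γ (V n))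
  (hVf : ∀ n p, V (n + 1) (f p) = V n p)
  (a : ℤ → ℝ)
  (ha : ∀ n, 0 < a n)
  (has : Summable a)

/-- The ambient space. -/
abbrev Amb (I : Set ℝ) := T1 × ↥I × (ℤ → ↥(Icc (-1 : ℝ) 1))

namespace BData

variable {I : Set ℝ} (D : BData I)

/-- The blown-up space. -/
def Z : Set (Amb I) :=
  {z | ∀ n, BRel ‖z.1 - orb D.ρ n‖ (tau (z.1 - orb D.ρ n) + D.V n (z.1, z.2.1)) (z.2.2 n)}

theorem Z_closed : IsClosed D.Z := by
  have : D.Z = ⋂ n, {z | BRel ‖z.1 - orb D.ρ n‖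
      (tau (z.1 - orb D.ρ n) + D.V n (z.1, z.2.1)) (z.2.2 n)} := by
    ext z; simp [Z]
  rw [this]
  refine isClosed_iInter fun n => ?_
  have h1 : Continuous fun z : Amb I => ‖z.1 - orb D.ρ n‖ := by fun_prop
  have h2 : Continuous fun z : Amb I => tau (z.1 - orb D.ρ n) + D.V n (z.1, z.2.1) := by
    have := (D.hV n).1
    have := tau_cont
    fun_prop
  have h3 : Continuous fun z : Amb I => ((z.2.2 n : ↥(Icc (-1 : ℝ) 1)) : ℝ) := by fun_prop
  have e1 := (isClosed_le continuous_const h3 (f := fun _ => (1 : ℝ))).union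
    (isClosed_le h2 (h3.mul h1))
  have e2 := (isClosed_le h3 continuous_const (g := fun _ => (-1 : ℝ))).union
    (isClosed_le (h3.mul h1) h2)
  exact e1.inter e2

theorem Z_exists (θ : T1) (y : ↥I) : ∃ s, ((θ, y, s) : Amb I) ∈ D.Z := by
  choose s hs using fun n : ℤ => BRel_exists (norm_nonneg (θ - orb D.ρ n))
    (tau (θ - orb D.ρ n) + D.V n (θ, y))
  exact ⟨s, hs⟩

theorem Z_mono {z z' : Amb I} (hz : z ∈ D.Z) (hz' : z' ∈ D.Z) (h1 : z.1 = z'.1)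
    (hy : z.2.1 < z'.2.1) (n : ℤ) : z.2.2 n ≤ z'.2.2 n := by
  have a1 := hz n
  have a2 := hz' n
  rw [← h1] at a2
  refine BRel_mono (norm_nonneg _) (z'.2.2 n).2.1 (z.2.2 n).2.2 a1 a2 ?_
  have := (D.hV n).2.1 z.1 hy
  simpa using this

theorem Z_uniq_lt {z z' : Amb I} (hz : z ∈ D.Z) (hz' : z' ∈ D.Z) (h1 : z.1 = z'.1)
    (h2 : z.2.1 = z'.2.1) {n : ℤ} (h : z.2.2 n < z'.2.2 n) :
    z.1 = orb D.ρ n ∧ z.2.1 = D.γ z.1 := by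
  have a1 := hz n
  have a2 := hz' n
  rw [← h1, ← h2] at a2
  obtain ⟨e1, e2⟩ := BRel_uniq (norm_nonneg _) (z.2.2 n).2.1 (z'.2.2 n).2.2 a1 a2 h
  rw [norm_eq_zero] at e1
  rw [e1, tau_zero, zero_add] at e2
  refine ⟨sub_eq_zero.1 e1, ?_⟩
  apply ((D.hV n).2.1 z.1).injective
  show D.V n (z.1, z.2.1) = D.V n (z.1, D.γ z.1)
  rw [e2, (D.hV n).2.2]

theorem Z_uniq {z z' : Amb I} (hz : z ∈ D.Z) (hz' : z' ∈ D.Z) (h1 : z.1 = z'.1)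
    (h2 : z.2.1 = z'.2.1) {n : ℤ} (h : z.2.2 n ≠ z'.2.2 n) :
    z.1 = orb D.ρ n ∧ z.2.1 = D.γ z.1 := by
  rcases lt_or_gt_of_ne h with h | h
  · exact D.Z_uniq_lt hz hz' h1 h2 h
  · rw [h1, h2]
    exact D.Z_uniq_lt hz' hz h1.symm h2.symm h

theorem Z_eq_of_notMem {z z' : Amb I} (hz : z ∈ D.Z) (hz' : z' ∈ D.Z) (h1 : z.1 = z'.1)
    (h2 : z.2.1 = z'.2.1) (h : z.1 ∉ range (orb D.ρ) ∨ z.2.1 ≠ D.γ z.1) : z = z' := by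
  refine Prod.ext h1 (Prod.ext h2 (funext fun n => ?_))
  by_contra hne
  obtain ⟨e1, e2⟩ := D.Z_uniq hz hz' h1 h2 hne
  rcases h with h | h
  · exact h ⟨n, e1.symm⟩
  · exact h e2

/-- The separating function. -/
def P (z : Amb I) : ℝ := (z.2.1 : ℝ) + ∑' n, D.a n * (z.2.2 n : ℝ)

theorem term_bound (s : ↥(Icc (-1 : ℝ) 1)) (n : ℤ) : ‖D.a n * (s : ℝ)‖ ≤ D.a n := by
  rw [norm_mul, Real.norm_of_nonneg (D.ha n).le]
  have : ‖(s : ℝ)‖ ≤ 1 := abs_le.2 s.2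
  nlinarith [D.ha n]

theorem term_summable (s : ℤ → ↥(Icc (-1 : ℝ) 1)) : Summable fun n => D.a n * (s n : ℝ) :=
  Summable.of_norm_bounded D.has fun n => D.term_bound (s n) n

theorem P_cont : Continuous D.P := by
  unfold P
  refine Continuous.add (by fun_prop) ?_
  exact continuous_tsum (fun n => by fun_prop) D.has fun n z => D.term_bound _ n

/-- The fibre order. -/
def Lt (z z' : Amb I) : Prop := z.2.1 < z'.2.1 ∨ (z.2.1 = z'.2.1 ∧ ∃ n, z.2.2 n < z'.2.2 n)

theorem P_lt_of_y {z z' : Amb I} (hz : z ∈ D.Z) (hz' : z' ∈ D.Z) (h1 : z.1 = z'.1)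
    (h : z.2.1 < z'.2.1) : (z'.2.1 : ℝ) - z.2.1 ≤ D.P z' - D.P z := by
  have := (D.term_summable z.2.2).tsum_le_tsum
    (fun n => mul_le_mul_of_nonneg_left (show (z.2.2 n : ℝ) ≤ z'.2.2 n from
      D.Z_mono hz hz' h1 h n) (D.ha n).le)
    (D.term_summable z'.2.2)
  unfold P
  linarith

theorem P_eq_of_same {z z' : Amb I} (hz : z ∈ D.Z) (hz' : z' ∈ D.Z) (h1 : z.1 = z'.1)
    (h2 : z.2.1 = z'.2.1) {n : ℤ} (hn : z.1 = orb D.ρ n) :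
    D.P z' - D.P z = D.a n * ((z'.2.2 n : ℝ) - z.2.2 n) := by
  have h0 : ∀ m, m ≠ n → D.a m * (z'.2.2 m : ℝ) - D.a m * (z.2.2 m : ℝ) = 0 := by
    intro m hm
    have : z.2.2 m = z'.2.2 m := by
      by_contra hne
      exact hm (orb_inj D.hρ ((D.Z_uniq hz hz' h1 h2 hne).1.symm.trans hn))
    rw [this, sub_self]
  have := (D.term_summable z'.2.2).tsum_sub (D.term_summable z.2.2)
  rw [tsum_eq_single n h0] at this
  unfold P
  rw [h2]
  linarith

theorem P_lt_of_Lt {z z' : Amb I} (hz : z ∈ D.Z) (hz' : z' ∈ D.Z) (h1 : z.1 = z'.1)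
    (h : Lt z z') : D.P z < D.P z' := by
  rcases h with h | ⟨h2, n, hn⟩
  · have := D.P_lt_of_y hz hz' h1 h
    have h' : (z.2.1 : ℝ) < z'.2.1 := h
    linarith
  · have := D.P_eq_of_same hz hz' h1 h2 (D.Z_uniq_lt hz hz' h1 h2 hn).1
    have h' : (z.2.2 n : ℝ) < z'.2.2 n := hn
    have := mul_pos (D.ha n) (sub_pos.2 h')
    linarith

theorem tri {z z' : Amb I} (h1 : z.1 = z'.1) : Lt z z' ∨ z = z' ∨ Lt z' z := by
  rcases lt_trichotomy z.2.1 z'.2.1 with h | h | h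
  · exact Or.inl (Or.inl h)
  · by_cases he : z.2.2 = z'.2.2
    · exact Or.inr (Or.inl (Prod.ext h1 (Prod.ext h he)))
    · obtain ⟨n, hn⟩ := Function.ne_iff.1 he
      rcases lt_or_gt_of_ne hn with hn | hn
      · exact Or.inl (Or.inr ⟨h, n, hn⟩)
      · exact Or.inr (Or.inr (Or.inr ⟨h.symm, n, hn⟩))
  · exact Or.inr (Or.inr (Or.inl h))

theorem P_lt_iff {z z' : Amb I} (hz : z ∈ D.Z) (hz' : z' ∈ D.Z) (h1 : z.1 = z'.1) :
    D.P z < D.P z' ↔ Lt z z' := by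
  refine ⟨fun h => ?_, D.P_lt_of_Lt hz hz' h1⟩
  rcases tri h1 with h2 | h2 | h2
  · exact h2
  · rw [h2] at h; exact absurd h (lt_irrefl _)
  · exact absurd (D.P_lt_of_Lt hz' hz h1.symm h2) h.not_gt

theorem P_inj {z z' : Amb I} (hz : z ∈ D.Z) (hz' : z' ∈ D.Z) (h1 : z.1 = z'.1)
    (h : D.P z = D.P z') : z = z' := by
  rcases tri h1 with h2 | h2 | h2
  · exact absurd h (D.P_lt_of_Lt hz hz' h1 h2).ne
  · exact h2
  · exact absurd h (D.P_lt_of_Lt hz' hz h1.symm h2).ne'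

/-- Surjectivity on fibres. -/
theorem P_surj [CompactSpace ↥I] [PreconnectedSpace ↥I] {z z' : Amb I} (hz : z ∈ D.Z)
    (hz' : z' ∈ D.Z) (h1 : z.1 = z'.1) {x : ℝ} (hx : D.P z ≤ x) (hx' : x ≤ D.P z') :
    ∃ w ∈ D.Z, w.1 = z.1 ∧ D.P w = x := by
  have hc : ∀ K : Set (Amb I), IsClosed K → IsClosed ((fun z : Amb I => z.2.1) '' K) := by
    intro K hK
    exact (hK.isCompact.image (by fun_prop)).isClosed
  let K1 : Set (Amb I) := D.Z ∩ {w | w.1 = z.1} ∩ {w | D.P w ≤ x}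
  let K2 : Set (Amb I) := D.Z ∩ {w | w.1 = z.1} ∩ {w | x ≤ D.P w}
  have hf : IsClosed (D.Z ∩ {w | w.1 = z.1}) :=
    D.Z_closed.inter (isClosed_eq continuous_fst continuous_const)
  have hK1 : IsClosed K1 := hf.inter (isClosed_le D.P_cont continuous_const)
  have hK2 : IsClosed K2 := hf.inter (isClosed_le continuous_const D.P_cont)
  have := isPreconnected_closed_iff.1 (isPreconnected_univ (α := ↥I)) _ _ (hc K1 hK1) (hc K2 hK2)
    (by
      intro y _
      obtain ⟨s, hs⟩ := D.Z_exists z.1 y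
      rcases le_total (D.P (z.1, y, s)) x with h | h
      · exact Or.inl ⟨_, ⟨⟨hs, rfl⟩, h⟩, rfl⟩
      · exact Or.inr ⟨_, ⟨⟨hs, rfl⟩, h⟩, rfl⟩)
    ⟨z.2.1, mem_univ _, z, ⟨⟨hz, rfl⟩, hx⟩, rfl⟩
    ⟨z'.2.1, mem_univ _, z', ⟨⟨hz', h1.symm⟩, hx'⟩, rfl⟩
  obtain ⟨y, -, ⟨w1, ⟨⟨hw1, hw1'⟩, hw1x⟩, hy1⟩, ⟨w2, ⟨⟨hw2, hw2'⟩, hw2x⟩, hy2⟩⟩ := this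
  have hw1' : w1.1 = z.1 := hw1'
  have hw2' : w2.1 = z.1 := hw2'
  have hw1x : D.P w1 ≤ x := hw1x
  have hw2x : x ≤ D.P w2 := hw2x
  have hyy : w1.2.1 = w2.2.1 := hy1.trans hy2.symm
  rcases hw1x.eq_or_lt with he | hlt1
  · exact ⟨w1, hw1, hw1', he⟩
  rcases hw2x.eq_or_lt with he | hlt2
  · exact ⟨w2, hw2, hw2', he.symm⟩
  have hww : w1.1 = w2.1 := hw1'.trans hw2'.symm
  have hL := (D.P_lt_iff hw1 hw2 hww).1 (hlt1.trans hlt2)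
  rcases hL with hL | ⟨-, n, hn⟩
  · exact absurd hyy hL.ne
  obtain ⟨ho, hγ⟩ := D.Z_uniq_lt hw1 hw2 hww hyy hn
  have hn' : (w1.2.2 n : ℝ) < w2.2.2 n := hn
  have hpe := D.P_eq_of_same hw1 hw2 hww hyy ho
  -- the intermediate coordinate
  have ha := D.ha n
  let t : ℝ := w1.2.2 n + (x - D.P w1) / D.a n
  have ht1 : (w1.2.2 n : ℝ) ≤ t := by
    have : 0 ≤ (x - D.P w1) / D.a n := div_nonneg (by linarith) ha.le
    show _ ≤ _ + _
    linarith
  have ht2 : t ≤ w2.2.2 n := by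
    have : (x - D.P w1) / D.a n ≤ w2.2.2 n - w1.2.2 n := by
      rw [div_le_iff₀ ha]
      linarith
    show _ + _ ≤ _
    linarith
  let T : ↥(Icc (-1 : ℝ) 1) := ⟨t, (w1.2.2 n).2.1.trans ht1, ht2.trans (w2.2.2 n).2.2⟩
  let w : Amb I := (w1.1, w1.2.1, Function.update w1.2.2 n T)
  have hw : w ∈ D.Z := by
    intro m
    by_cases hm : m = n
    · subst hm
      have a1 := hw1 m
      have a2 := hw2 m
      rw [← hww, ← hyy] at a2
      have := BRel_convex (norm_nonneg _) a1 a2 ht1 ht2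
      simpa [w, T] using this
    · have := hw1 m
      simpa [w, Function.update_of_ne hm] using this
  refine ⟨w, hw, hw1', ?_⟩
  have h3 := D.P_eq_of_same hw1 hw rfl rfl ho
  have h4 : (w.2.2 n : ℝ) = t := by simp [w, T]
  rw [h4] at h3
  have h5 : D.a n * (t - w1.2.2 n) = x - D.P w1 := by
    show D.a n * ((w1.2.2 n + (x - D.P w1) / D.a n) - w1.2.2 n) = _
    field_simp
    ring
  linarith

/-! ### Boundary sections -/

theorem section_cont [CompactSpace ↥I] (E : ↥I) (hE : ∀ θ, E ≠ D.γ θ) :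
    ∃ q : T1 → Amb I, Continuous q ∧ ∀ θ, q θ ∈ D.Z ∧ (q θ).1 = θ ∧ (q θ).2.1 = E := by
  let K : Set (Amb I) := D.Z ∩ {w | w.2.1 = E}
  have hK : IsClosed K := D.Z_closed.inter (isClosed_eq (by fun_prop) continuous_const)
  have : CompactSpace ↥K := isCompact_iff_compactSpace.1 hK.isCompact
  have hbij : Bijective (fun k : ↥K => k.1.1) := by
    constructor
    · rintro ⟨z, hz, hzE⟩ ⟨z', hz', hzE'⟩ h
      have hzE : z.2.1 = E := hzE
      have hzE' : z'.2.1 = E := hzE'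
      exact Subtype.ext (D.Z_eq_of_notMem hz hz' h (hzE.trans hzE'.symm)
        (Or.inr (by rw [hzE]; exact hE _)))
    · intro θ
      obtain ⟨s, hs⟩ := D.Z_exists θ E
      exact ⟨⟨(θ, E, s), hs, rfl⟩, rfl⟩
  have hcont : Continuous (Equiv.ofBijective _ hbij) := by
    show Continuous (fun k : ↥K => k.1.1)
    fun_prop
  let e := hcont.homeoOfEquivCompactToT2
  refine ⟨fun θ => (e.symm θ).1, continuous_subtype_val.comp e.symm.continuous, fun θ => ?_⟩
  refine ⟨(e.symm θ).2.1, ?_, (e.symm θ).2.2⟩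
  exact e.apply_symm_apply θ

theorem hAB : (D.A : ℝ) < D.B := (D.hAγ 0).trans (D.hγB 0)

/-- The homeomorphism from the abstract space to the annulus. -/
theorem exists_Phi [CompactSpace ↥I] [PreconnectedSpace ↥I] (hI : I.OrdConnected) :
    ∃ Φ : ↥D.Z ≃ₜ T1 × ↥I, (∀ z, (Φ z).1 = z.1.1) ∧
      (∀ z z' : ↥D.Z, z.1.1 = z'.1.1 → ((Φ z).2 < (Φ z').2 ↔ Lt z.1 z'.1)) ∧
      (∀ z z' : ↥D.Z, z.1.1 = z'.1.1 → dist (Φ z).2 (Φ z').2 ≤ |D.P z.1 - D.P z'.1|) := by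
  obtain ⟨qA, hqAc, hqA⟩ := D.section_cont D.A (fun θ => (D.hAγ θ).ne)
  obtain ⟨qB, hqBc, hqB⟩ := D.section_cont D.B (fun θ => (D.hγB θ).ne')
  have hAB := D.hAB
  have hlen : ∀ θ, (D.B : ℝ) - D.A ≤ D.P (qB θ) - D.P (qA θ) := by
    intro θ
    have := D.P_lt_of_y (hqA θ).1 (hqB θ).1 ((hqA θ).2.1.trans (hqB θ).2.1.symm)
      (by rw [(hqA θ).2.2, (hqB θ).2.2]; exact hAB)
    rw [(hqA θ).2.2, (hqB θ).2.2] at this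
    exact this
  have hlo : ∀ z ∈ D.Z, D.P (qA z.1) ≤ D.P z := by
    intro z hz
    rcases (D.hA z.2.1).lt_or_eq with h | h
    · have h1 := (hqA z.1).2.2
      exact (D.P_lt_of_Lt (hqA z.1).1 hz (hqA z.1).2.1 (Or.inl (by rw [h1]; exact h))).le
    · rw [D.Z_eq_of_notMem (hqA z.1).1 hz (hqA z.1).2.1 ((hqA z.1).2.2.trans h)
        (Or.inr (by rw [(hqA z.1).2.2]; exact (D.hAγ _).ne))]
  have hhi : ∀ z ∈ D.Z, D.P z ≤ D.P (qB z.1) := by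
    intro z hz
    rcases (D.hB z.2.1).lt_or_eq with h | h
    · have h1 := (hqB z.1).2.2
      exact (D.P_lt_of_Lt hz (hqB z.1).1 (hqB z.1).2.1.symm (Or.inl (by rw [h1]; exact h))).le
    · rw [D.Z_eq_of_notMem (hqB z.1).1 hz (hqB z.1).2.1 ((hqB z.1).2.2.trans h.symm)
        (Or.inr (by rw [(hqB z.1).2.2]; exact (D.hγB _).ne'))]
  let c : T1 → ℝ := fun θ => (D.B - D.A) / (D.P (qB θ) - D.P (qA θ))
  have hc0 : ∀ θ, 0 < c θ := fun θ => div_pos (by linarith) (by linarith [hlen θ])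
  have hc1 : ∀ θ, c θ ≤ 1 := fun θ => (div_le_one (by linarith [hlen θ])).2 (hlen θ)
  have hcc : ∀ θ, c θ * (D.P (qB θ) - D.P (qA θ)) = D.B - D.A := fun θ =>
    div_mul_cancel₀ _ (by linarith [hlen θ])
  have hccont : Continuous c := by
    have h1 := D.P_cont.comp hqAc
    have h2 := D.P_cont.comp hqBc
    exact continuous_const.div (h2.sub h1) (fun θ => by
      have := hlen θ
      show D.P (qB θ) - D.P (qA θ) ≠ 0
      linarith)
  let φ : Amb I → ℝ := fun z => D.A + c z.1 * (D.P z - D.P (qA z.1))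
  have hφc : Continuous φ := by
    have h1 := D.P_cont
    have h2 : Continuous fun z : Amb I => D.P (qA z.1) := by fun_prop
    fun_prop
  have hφm : ∀ z ∈ D.Z, φ z ∈ I := by
    intro z hz
    refine hI.out D.A.2 D.B.2 ⟨?_, ?_⟩
    · have := mul_nonneg (hc0 z.1).le (sub_nonneg.2 (hlo z hz))
      show _ ≤ _ + _
      linarith
    · have := mul_le_mul_of_nonneg_left (sub_le_sub_right (hhi z hz) (D.P (qA z.1))) (hc0 z.1).le
      rw [hcc] at this
      show _ + _ ≤ _
      linarith
  let Φ0 : ↥D.Z → T1 × ↥I := fun z => (z.1.1, ⟨φ z.1, hφm z.1 z.2⟩)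
  have hΦc : Continuous Φ0 := by
    refine Continuous.prodMk (by fun_prop) ?_
    exact Continuous.subtype_mk (hφc.comp continuous_subtype_val) _
  have hdiff : ∀ z z' : Amb I, z.1 = z'.1 → φ z - φ z' = c z.1 * (D.P z - D.P z') := by
    intro z z' h
    simp only [φ]
    rw [← h]
    ring
  have hbij : Bijective Φ0 := by
    constructor
    · intro z z' h
      have h1 : z.1.1 = z'.1.1 := congrArg (fun q : T1 × ↥I => q.1) h
      have h2 : φ z.1 = φ z'.1 := congrArg (fun q : T1 × ↥I => (q.2 : ℝ)) h
      have h3 := hdiff z.1 z'.1 h1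
      rw [h2, sub_self] at h3
      have h4 := (mul_eq_zero.1 h3.symm).resolve_left (hc0 _).ne'
      exact Subtype.ext (D.P_inj z.2 z'.2 h1 (sub_eq_zero.1 h4))
    · rintro ⟨θ, x⟩
      have hxA : (D.A : ℝ) ≤ x := D.hA x
      have hxB : (x : ℝ) ≤ D.B := D.hB x
      have e1 : D.P (qA θ) ≤ D.P (qA θ) + (x - D.A) / c θ := by
        have := div_nonneg (sub_nonneg.2 hxA) (hc0 θ).le
        linarith
      have e2 : D.P (qA θ) + (x - D.A) / c θ ≤ D.P (qB θ) := by
        have : (x - D.A) / c θ ≤ D.P (qB θ) - D.P (qA θ) := by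
          rw [div_le_iff₀ (hc0 θ), mul_comm, hcc]
          linarith
        linarith
      obtain ⟨w, hw, hw1, hwP⟩ := D.P_surj (hqA θ).1 (hqB θ).1
        ((hqA θ).2.1.trans (hqB θ).2.1.symm) e1 e2
      have hw1 : w.1 = θ := hw1.trans (hqA θ).2.1
      refine ⟨⟨w, hw⟩, Prod.ext hw1 (Subtype.ext ?_)⟩
      show (D.A : ℝ) + c w.1 * (D.P w - D.P (qA w.1)) = x
      rw [hw1, hwP]
      have := (hc0 θ).ne'
      field_simp
      ring
  have : CompactSpace ↥D.Z := isCompact_iff_compactSpace.1 D.Z_closed.isCompact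
  have hcont : Continuous (Equiv.ofBijective _ hbij) := hΦc
  have hval : ∀ z, hcont.homeoOfEquivCompactToT2 z = Φ0 z := fun z => rfl
  refine ⟨hcont.homeoOfEquivCompactToT2, fun z => rfl, ?_, ?_⟩
  · intro z z' h
    rw [← D.P_lt_iff z.2 z'.2 h, hval, hval]
    show φ z.1 < φ z'.1 ↔ _
    have h1 := hdiff z.1 z'.1 h
    have h2 := hc0 z.1.1
    constructor
    · intro h3
      by_contra h4
      have := mul_nonneg h2.le (sub_nonneg.2 (not_lt.1 h4))
      linarith
    · intro h3
      have := mul_pos h2 (sub_pos.2 h3)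
      have e : c z.1.1 * (D.P z.1 - D.P z'.1) = - (c z.1.1 * (D.P z'.1 - D.P z.1)) := by ring
      linarith
  · intro z z' h
    rw [hval, hval]
    show |φ z.1 - φ z'.1| ≤ _
    rw [hdiff _ _ h, abs_mul, abs_of_pos (hc0 _)]
    exact mul_le_of_le_one_left (abs_nonneg _) (hc1 _)

end BData

/-! ### The blow-up -/

namespace BData

variable {I : Set ℝ} (D : BData I)

/-- The induced map on the ambient space. -/
def F0 (z : Amb I) : Amb I :=
  ((D.f (z.1, z.2.1)).1, (D.f (z.1, z.2.1)).2, fun n => z.2.2 (n - 1))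

theorem F0_mem {z : Amb I} (hz : z ∈ D.Z) : D.F0 z ∈ D.Z := by
  intro n
  have h := hz (n - 1)
  have h1 : orb D.ρ n = orb D.ρ (n - 1) + (D.ρ : T1) := by rw [← orb_succ]; simp
  have h2 : (D.F0 z).1 - orb D.ρ n = z.1 - orb D.ρ (n - 1) := by
    show (D.f (z.1, z.2.1)).1 - _ = _
    rw [D.hf.2.1, h1]
    exact add_sub_add_right_eq_sub _ _ _
  have h3 : D.V n ((D.F0 z).1, (D.F0 z).2.1) = D.V (n - 1) (z.1, z.2.1) := by
    have := D.hVf (n - 1) (z.1, z.2.1)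
    rw [sub_add_cancel] at this
    exact this
  rw [h2, h3]
  exact h

theorem F0_cont : Continuous D.F0 := by
  have := D.hf.1
  unfold F0
  fun_prop

/-- The induced map on the blown-up space. -/
def F (z : ↥D.Z) : ↥D.Z := ⟨D.F0 z.1, D.F0_mem z.2⟩

theorem F_cont : Continuous D.F :=
  Continuous.subtype_mk (D.F0_cont.comp continuous_subtype_val) _

theorem F_fst (z : ↥D.Z) : (D.F z).1.1 = z.1.1 + (D.ρ : T1) := D.hf.2.1 _

theorem F_Lt {z z' : ↥D.Z} (h1 : z.1.1 = z'.1.1) (h : Lt z.1 z'.1) :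
    Lt (D.F z).1 (D.F z').1 := by
  rcases h with h | ⟨h, n, hn⟩
  · left
    show (D.f (z.1.1, z.1.2.1)).2 < (D.f (z'.1.1, z'.1.2.1)).2
    rw [← h1]
    exact D.hf.2.2 _ h
  · right
    refine ⟨?_, n + 1, ?_⟩
    · show (D.f (z.1.1, z.1.2.1)).2 = (D.f (z'.1.1, z'.1.2.1)).2
      rw [h1, h]
    · show z.1.2.2 (n + 1 - 1) < z'.1.2.2 (n + 1 - 1)
      simpa using hn

/-- The projection to the original annulus. -/
def pr (z : ↥D.Z) : T1 × ↥I := (z.1.1, z.1.2.1)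

theorem pr_cont : Continuous D.pr := by unfold pr; fun_prop

theorem pr_surj : Surjective D.pr := by
  rintro ⟨θ, y⟩
  obtain ⟨s, hs⟩ := D.Z_exists θ y
  exact ⟨⟨_, hs⟩, rfl⟩

theorem pr_F (z : ↥D.Z) : D.pr (D.F z) = D.f (D.pr z) := rfl

/-- Over-`Γ` part of the blown-up space. -/
def G : Set ↥D.Z := {z | z.1.2.1 = D.γ z.1.1}

theorem G_closed : IsClosed D.G := by
  have := D.hγc
  exact isClosed_eq (by fun_prop) (by fun_prop)

theorem G_F {z : ↥D.Z} (hz : z ∈ D.G) : D.F z ∈ D.G := by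
  have hz : z.1.2.1 = D.γ z.1.1 := hz
  show (D.f (z.1.1, z.1.2.1)).2 = D.γ (D.f (z.1.1, z.1.2.1)).1
  rw [hz, D.hγinv]

theorem exists_over (θ : T1) : ∃ z ∈ D.G, z.1.1 = θ := by
  obtain ⟨s, hs⟩ := D.Z_exists θ (D.γ θ)
  exact ⟨⟨_, hs⟩, rfl, rfl⟩

theorem G_uniq {z z' : ↥D.Z} (hz : z ∈ D.G) (hz' : z' ∈ D.G) (h : z.1.1 = z'.1.1)
    (ho : z.1.1 ∉ range (orb D.ρ)) : z = z' := by
  have hz : z.1.2.1 = D.γ z.1.1 := hz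
  have hz' : z'.1.2.1 = D.γ z'.1.1 := hz'
  exact Subtype.ext (D.Z_eq_of_notMem z.2 z'.2 h (by rw [hz, hz', h]) (Or.inl ho))

theorem s0_pos {z : ↥D.Z} (hz : z ∈ D.G) (h : ‖z.1.1‖ < tau z.1.1) : (z.1.2.2 0 : ℝ) = 1 := by
  have hz : z.1.2.1 = D.γ z.1.1 := hz
  have h1 := z.2 0
  rw [orb_zero, sub_zero, hz, (D.hV 0).2.2, add_zero] at h1
  exact BRel_pos (z.1.2.2 0).2.2 (norm_nonneg _) h1 h

theorem s0_neg {z : ↥D.Z} (hz : z ∈ D.G) (h : tau z.1.1 < -‖z.1.1‖) :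
    (z.1.2.2 0 : ℝ) = -1 := by
  have hz : z.1.2.1 = D.γ z.1.1 := hz
  have h1 := z.2 0
  rw [orb_zero, sub_zero, hz, (D.hV 0).2.2, add_zero] at h1
  exact BRel_neg (z.1.2.2 0).2.1 (norm_nonneg _) h1 h

/-- Points of the blown-up curve over non-orbit base points. -/
def N : Set ↥D.Z := {z | z ∈ D.G ∧ z.1.1 ∉ range (orb D.ρ)}

theorem N_F {z : ↥D.Z} (hz : z ∈ D.N) : D.F z ∈ D.N := by
  refine ⟨D.G_F hz.1, ?_⟩
  rintro ⟨n, hn⟩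
  apply hz.2
  refine ⟨n - 1, ?_⟩
  rw [F_fst] at hn
  have h1 : orb D.ρ n = orb D.ρ (n - 1) + (D.ρ : T1) := by rw [← orb_succ]; simp
  rw [h1] at hn
  exact add_right_cancel hn

/-- The minimal set in the abstract space. -/
def M0 : Set ↥D.Z := closure D.N

theorem M0_G : D.M0 ⊆ D.G := closure_minimal (fun _ h => h.1) D.G_closed

theorem M0_F {z : ↥D.Z} (hz : z ∈ D.M0) : D.F z ∈ D.M0 :=
  map_mem_closure D.F_cont hz fun _ h => D.N_F h

theorem compactZ [CompactSpace ↥I] : CompactSpace ↥D.Z :=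
  isCompact_iff_compactSpace.1 D.Z_closed.isCompact

theorem invariant_sub [CompactSpace ↥I] {K : Set ↥D.Z} (hK : IsClosed K) (hne : K.Nonempty)
    (hKM : K ⊆ D.M0) (hF : ∀ z ∈ K, D.F z ∈ K) : K = D.M0 := by
  have := D.compactZ
  refine hKM.antisymm (closure_minimal ?_ hK)
  have hE : (fun z : ↥D.Z => z.1.1) '' K = univ := by
    refine rot_invariant_closed D.hρ (hne.image _) (hK.isCompact.image (by fun_prop)).isClosed ?_
    rintro _ ⟨z, hz, rfl⟩
    exact ⟨D.F z, hF z hz, D.F_fst z⟩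
  intro z hz
  obtain ⟨w, hw, hwz⟩ := hE.ge (mem_univ z.1.1)
  rw [D.G_uniq hz.1 (D.M0_G (hKM hw)) hwz.symm hz.2]
  exact hw

theorem M0_nonempty : D.M0.Nonempty := by
  obtain ⟨θ, hθ⟩ := (orb_compl_dense D.ρ).nonempty
  obtain ⟨z, hz, h⟩ := D.exists_over θ
  exact ⟨z, subset_closure ⟨hz, by rw [h]; exact hθ⟩⟩

theorem exists_pos [CompactSpace ↥I] : ∃ z ∈ D.M0, z.1.1 = 0 ∧ (z.1.2.2 0 : ℝ) = 1 := by
  have := D.compactZ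
  let K : Set ↥D.Z := D.M0 ∩ {z | (z.1.2.2 0 : ℝ) = 1}
  have hK : IsClosed K := isClosed_closure.inter (isClosed_eq (by fun_prop) continuous_const)
  have hE : IsClosed ((fun z : ↥D.Z => z.1.1) '' K) :=
    (hK.isCompact.image (by fun_prop)).isClosed
  have h0 : (0 : T1) ∈ (fun z : ↥D.Z => z.1.1) '' K := by
    refine closure_minimal ?_ hE (tau_pos_mem D.ρ)
    rintro θ ⟨h1, h2⟩
    obtain ⟨z, hz, h⟩ := D.exists_over θ
    subst h
    exact ⟨z, ⟨subset_closure ⟨hz, h2⟩, D.s0_pos hz h1⟩, rfl⟩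
  obtain ⟨z, hz, h⟩ := h0
  exact ⟨z, hz.1, h, hz.2⟩

theorem exists_neg [CompactSpace ↥I] : ∃ z ∈ D.M0, z.1.1 = 0 ∧ (z.1.2.2 0 : ℝ) = -1 := by
  have := D.compactZ
  let K : Set ↥D.Z := D.M0 ∩ {z | (z.1.2.2 0 : ℝ) = -1}
  have hK : IsClosed K := isClosed_closure.inter (isClosed_eq (by fun_prop) continuous_const)
  have hE : IsClosed ((fun z : ↥D.Z => z.1.1) '' K) :=
    (hK.isCompact.image (by fun_prop)).isClosed
  have h0 : (0 : T1) ∈ (fun z : ↥D.Z => z.1.1) '' K := by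
    refine closure_minimal ?_ hE (tau_neg_mem D.ρ)
    rintro θ ⟨h1, h2⟩
    obtain ⟨z, hz, h⟩ := D.exists_over θ
    subst h
    exact ⟨z, ⟨subset_closure ⟨hz, h2⟩, D.s0_neg hz h1⟩, rfl⟩
  obtain ⟨z, hz, h⟩ := h0
  exact ⟨z, hz.1, h, hz.2⟩

theorem F_M0 [CompactSpace ↥I] : D.F '' D.M0 = D.M0 := by
  have := D.compactZ
  refine D.invariant_sub (isClosed_closure.isCompact.image D.F_cont).isClosed
    (D.M0_nonempty.image _) ?_ ?_
  · rintro _ ⟨z, hz, rfl⟩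
    exact D.M0_F hz
  · rintro _ ⟨z, hz, rfl⟩
    exact ⟨D.F z, D.M0_F hz, rfl⟩

theorem F_iter_M0 [CompactSpace ↥I] (m : ℕ) {z : ↥D.Z} (hz : z ∈ D.M0) :
    ∃ w ∈ D.M0, D.F^[m] w = z := by
  induction m generalizing z with
  | zero => exact ⟨z, hz, rfl⟩
  | succ k ih =>
    obtain ⟨w, hw, hwz⟩ := ih hz
    obtain ⟨u, hu, rfl⟩ := D.F_M0.ge hw
    exact ⟨u, hu, hwz⟩

theorem F_iter_fst (m : ℕ) (z : ↥D.Z) :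
    (D.F^[m] z).1.1 = z.1.1 + orb D.ρ m := by
  induction m generalizing z with
  | zero => simp [orb_zero]
  | succ k ih =>
    rw [iterate_succ_apply, ih, F_fst]
    push_cast
    rw [orb_succ]
    abel

theorem orb_neg (ρ : ℝ) (m : ℤ) : orb ρ (-m) + orb ρ m = 0 := by
  unfold orb
  rw [← AddCircle.coe_add]
  simp

/-- Main construction. -/
theorem main [CompactSpace ↥I] [PreconnectedSpace ↥I] (hI : I.OrdConnected) :
    ∃ fhat h : T1 × ↥I → T1 × ↥I,
      BlowUpConclusion (fun θ : T1 => θ + (D.ρ : T1)) D.f D.γ fhat h ∧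
      Pinched (h ⁻¹' curveGraph D.γ) ∧
      ∃ M : Set (T1 × ↥I), M ⊆ h ⁻¹' curveGraph D.γ ∧
        IsAAMinimal fhat M ∧ ¬ IsAPMinimal fhat M := by
  obtain ⟨Φ, hΦ1, hΦlt, hΦd⟩ := D.exists_Phi hI
  have hsy1 : ∀ p, (Φ.symm p).1.1 = p.1 := by
    intro p
    rw [← hΦ1, Φ.apply_symm_apply]
  let fhat : T1 × ↥I → T1 × ↥I := fun p => Φ (D.F (Φ.symm p))
  let h : T1 × ↥I → T1 × ↥I := fun p => D.pr (Φ.symm p)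
  have hG : ∀ p, p ∈ h ⁻¹' curveGraph D.γ ↔ Φ.symm p ∈ D.G := fun p => Iff.rfl
  have hmono : ∀ θ : T1, Monotone fun x : ↥I => (h (θ, x)).2 := by
    intro θ x x' hx
    by_contra hlt
    have hlt : (Φ.symm (θ, x')).1.2.1 < (Φ.symm (θ, x)).1.2.1 := not_le.1 hlt
    have := (hΦlt _ _ (by rw [hsy1, hsy1])).2 (Or.inl hlt)
    rw [Φ.apply_symm_apply, Φ.apply_symm_apply] at this
    exact absurd hx (not_le.2 this)
  have hfact : IsFactorMap fhat D.f h := by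
    refine ⟨D.pr_cont.comp Φ.symm.continuous, D.pr_surj.comp Φ.symm.surjective, ?_⟩
    funext p
    show D.pr (Φ.symm (Φ (D.F (Φ.symm p)))) = D.f (D.pr (Φ.symm p))
    rw [Φ.symm_apply_apply, pr_F]
  have hFc : Continuous fhat := Φ.continuous.comp (D.F_cont.comp Φ.symm.continuous)
  have hiter : ∀ (m : ℕ) (z : ↥D.Z), fhat^[m] (Φ z) = Φ (D.F^[m] z) := by
    intro m
    induction m with
    | zero => intro z; rfl
    | succ k ih =>
      intro z
      rw [iterate_succ_apply, iterate_succ_apply, ← ih]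
      show fhat^[k] (Φ (D.F (Φ.symm (Φ z)))) = _
      rw [Φ.symm_apply_apply]
  refine ⟨fhat, h, ⟨hfact, fun p => hsy1 p, ⟨hFc, ?_, ?_⟩, hmono, ?_, ?_, ?_⟩, ?_, ?_⟩
  · intro p
    show (Φ (D.F (Φ.symm p))).1 = p.1 + _
    rw [hΦ1, F_fst, hsy1]
  · intro θ x x' hx
    have e1 : (Φ.symm (θ, x)).1.1 = (Φ.symm (θ, x')).1.1 := by rw [hsy1, hsy1]
    have h1 := (hΦlt (Φ.symm (θ, x)) (Φ.symm (θ, x')) e1).1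
      (by rw [Φ.apply_symm_apply, Φ.apply_symm_apply]; exact hx)
    exact (hΦlt _ _ (by rw [F_fst, F_fst, e1])).2 (D.F_Lt e1 h1)
  · intro p hp q hq hpq
    have h1 : (Φ.symm p).1.1 = (Φ.symm q).1.1 := congrArg (fun r : T1 × ↥I => r.1) hpq
    have h2 : (Φ.symm p).1.2.1 = (Φ.symm q).1.2.1 := congrArg (fun r : T1 × ↥I => r.2) hpq
    exact Φ.symm.injective (Subtype.ext
      (D.Z_eq_of_notMem (Φ.symm p).2 (Φ.symm q).2 h1 h2 (Or.inr hp)))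
  · refine ⟨range fun n : ℤ => (orb D.ρ n, D.γ (orb D.ρ n)), ?_, countable_range _, ?_, ?_⟩
    · rintro _ ⟨n, rfl⟩
      rfl
    · rintro _ ⟨n, rfl⟩
      obtain ⟨s, hs⟩ := D.Z_exists (orb D.ρ n) (D.γ (orb D.ρ n))
      have hmem : ∀ t : ↥(Icc (-1 : ℝ) 1),
          ((orb D.ρ n, D.γ (orb D.ρ n), Function.update s n t) : Amb I) ∈ D.Z := by
        intro t m
        by_cases hm : m = n
        · subst hm
          show BRel ‖orb D.ρ m - orb D.ρ m‖ (tau (orb D.ρ m - orb D.ρ m) +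
            D.V m (orb D.ρ m, D.γ (orb D.ρ m))) _
          rw [sub_self, norm_zero, tau_zero, (D.hV m).2.2, zero_add]
          exact BRel_zero _
        · have := hs m
          simpa [Function.update_of_ne hm] using this
      let z1 : ↥D.Z := ⟨_, hmem ⟨-1, by norm_num⟩⟩
      let z2 : ↥D.Z := ⟨_, hmem ⟨1, by norm_num⟩⟩
      have h1 : Φ z1 = (orb D.ρ n, (Φ z1).2) := Prod.ext (hΦ1 _) rfl
      have h2 : Φ z2 = (orb D.ρ n, (Φ z2).2) := Prod.ext (hΦ1 _) rfl
      have hh1 : (h (orb D.ρ n, (Φ z1).2)).2 = D.γ (orb D.ρ n) := by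
        rw [← h1]
        show (Φ.symm (Φ z1)).1.2.1 = _
        rw [Φ.symm_apply_apply]
      have hh2 : (h (orb D.ρ n, (Φ z2).2)).2 = D.γ (orb D.ρ n) := by
        rw [← h2]
        show (Φ.symm (Φ z2)).1.2.1 = _
        rw [Φ.symm_apply_apply]
      refine ⟨(Φ z1).2, (Φ z2).2, ?_, ?_⟩
      · refine (hΦlt z1 z2 rfl).2 (Or.inr ⟨rfl, n, ?_⟩)
        have e1 : (z1.1.2.2 n : ℝ) = -1 := by simp [z1]
        have e2 : (z2.1.2.2 n : ℝ) = 1 := by simp [z2]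
        show (z1.1.2.2 n : ℝ) < z2.1.2.2 n
        rw [e1, e2]
        norm_num
      · ext ⟨θ, x⟩
        constructor
        · intro hx
          have hx : h (θ, x) = (orb D.ρ n, D.γ (orb D.ρ n)) := hx
          have hθ : θ = orb D.ρ n := (hsy1 (θ, x)).symm.trans (congrArg Prod.fst hx)
          subst hθ
          have hy : (Φ.symm (orb D.ρ n, x)).1.2.1 = D.γ (orb D.ρ n) := congrArg Prod.snd hx
          have hb := hsy1 (orb D.ρ n, x)
          refine ⟨rfl, ?_, ?_⟩
          · by_contra hlt
            have hlt : x < (Φ z1).2 := not_le.1 hlt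
            have := (hΦlt (Φ.symm (orb D.ρ n, x)) z1 hb).1
              (by rw [Φ.apply_symm_apply]; exact hlt)
            rcases this with h3 | ⟨-, m, hm⟩
            · exact absurd hy h3.ne
            · have hmn : n = m := orb_inj D.hρ
                (hb.symm.trans (D.Z_uniq_lt (Φ.symm (orb D.ρ n, x)).2 z1.2 hb hy hm).1)
              subst hmn
              have e1 : (z1.1.2.2 n : ℝ) = -1 := by simp [z1]
              have hm' : ((Φ.symm (orb D.ρ n, x)).1.2.2 n : ℝ) < z1.1.2.2 n := hm
              have := ((Φ.symm (orb D.ρ n, x)).1.2.2 n).2.1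
              linarith
          · by_contra hlt
            have hlt : (Φ z2).2 < x := not_le.1 hlt
            have := (hΦlt z2 (Φ.symm (orb D.ρ n, x)) hb.symm).1
              (by rw [Φ.apply_symm_apply]; exact hlt)
            rcases this with h3 | ⟨-, m, hm⟩
            · exact absurd hy h3.ne'
            · have hmn : n = m := orb_inj D.hρ
                (D.Z_uniq_lt z2.2 (Φ.symm (orb D.ρ n, x)).2 hb.symm hy.symm hm).1
              subst hmn
              have e1 : (z2.1.2.2 n : ℝ) = 1 := by simp [z2]
              have hm' : (z2.1.2.2 n : ℝ) < (Φ.symm (orb D.ρ n, x)).1.2.2 n := hm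
              have := ((Φ.symm (orb D.ρ n, x)).1.2.2 n).2.2
              linarith
        · rintro ⟨hθ, hx1, hx2⟩
          have hθ : θ = orb D.ρ n := hθ
          subst hθ
          refine Prod.ext (hsy1 _) (le_antisymm ?_ ?_)
          · exact (hmono _ hx2).trans hh2.le
          · exact hh1.ge.trans (hmono _ hx1)
    · rintro ⟨θ, y⟩ ⟨hp, hpC⟩
      have hp : y = D.γ θ := hp
      subst hp
      have hθ : θ ∉ range (orb D.ρ) := by
        rintro ⟨n, rfl⟩
        exact hpC ⟨n, rfl⟩
      obtain ⟨z, hz, hz1⟩ := D.exists_over θ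
      have h1 : Φ z = (θ, (Φ z).2) := Prod.ext ((hΦ1 _).trans hz1) rfl
      refine ⟨(Φ z).2, ?_⟩
      show h ⁻¹' {(θ, D.γ θ)} = {(θ, (Φ z).2)}
      rw [← h1]
      ext p
      constructor
      · intro hx
        have hx : h p = (θ, D.γ θ) := hx
        have e1 : (Φ.symm p).1.1 = θ := congrArg Prod.fst hx
        have e2 : (Φ.symm p).1.2.1 = D.γ θ := congrArg Prod.snd hx
        have hpG : Φ.symm p ∈ D.G := by
          show (Φ.symm p).1.2.1 = D.γ (Φ.symm p).1.1
          rw [e1, e2]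
        have := D.G_uniq hpG hz (e1.trans hz1.symm) (by rw [e1]; exact hθ)
        show p = Φ z
        rw [← this, Φ.apply_symm_apply]
      · intro hx
        have hx : p = Φ z := hx
        subst hx
        show D.pr (Φ.symm (Φ z)) = (θ, D.γ θ)
        rw [Φ.symm_apply_apply]
        have hz : z.1.2.1 = D.γ z.1.1 := hz
        exact Prod.ext hz1 (by rw [← hz1]; exact hz)
  · intro η hη hsub
    have hmem : ∀ θ, Φ.symm (θ, η θ) ∈ D.G := fun θ => hsub (show (θ, η θ) ∈ curveGraph η from rfl)
    let σ : T1 → ℝ := fun θ => ((Φ.symm (θ, η θ)).1.2.2 0 : ℝ)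
    have hσ : Continuous σ := by
      have h1 : Continuous fun θ => Φ.symm (θ, η θ) :=
        Φ.symm.continuous.comp (continuous_id.prodMk hη)
      fun_prop
    have e1 : σ 0 = 1 := by
      refine closure_minimal ?_ (isClosed_eq hσ continuous_const) (tau_pos_mem D.ρ)
      rintro θ ⟨h1, -⟩
      exact D.s0_pos (hmem θ) (by rw [hsy1]; exact h1)
    have e2 : σ 0 = -1 := by
      refine closure_minimal ?_ (isClosed_eq hσ continuous_const) (tau_neg_mem D.ρ)
      rintro θ ⟨h1, -⟩
      exact D.s0_neg (hmem θ) (by rw [hsy1]; exact h1)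
    linarith
  · obtain ⟨θ, hθ⟩ := (orb_compl_dense D.ρ).nonempty
    obtain ⟨z, hz, hz1⟩ := D.exists_over θ
    have h1 : Φ z = (θ, (Φ z).2) := Prod.ext ((hΦ1 _).trans hz1) rfl
    refine ⟨θ, (Φ z).2, ?_, ?_⟩
    · show (θ, (Φ z).2) ∈ _
      rw [← h1, hG, Φ.symm_apply_apply]
      exact hz
    · intro x hx
      have hx : Φ.symm (θ, x) ∈ D.G := hx
      have := D.G_uniq hx hz ((hsy1 _).trans hz1.symm) (by rw [hsy1]; exact hθ)
      rw [← this, Φ.apply_symm_apply]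
  · let M : Set (T1 × ↥I) := Φ '' D.M0
    have hMcl : IsClosed M := Φ.isClosedMap _ isClosed_closure
    have hMG : M ⊆ h ⁻¹' curveGraph D.γ := by
      rintro _ ⟨z, hz, rfl⟩
      rw [hG, Φ.symm_apply_apply]
      exact D.M0_G hz
    have hmin : IsMinimalSet fhat M := by
      refine ⟨D.M0_nonempty.image _, hMcl, ?_, ?_⟩
      · rw [← image_comp]
        have : fhat ∘ Φ = Φ ∘ D.F := by
          funext z
          exact hiter 1 z
        rw [this, image_comp, D.F_M0]
      · intro M' hM' hne hcl hinv
        have key : Φ ⁻¹' M' = D.M0 := by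
          refine D.invariant_sub (hcl.preimage Φ.continuous) ?_ ?_ ?_
          · obtain ⟨p, hp⟩ := hne
            exact ⟨Φ.symm p, by simpa using hp⟩
          · intro z hz
            obtain ⟨w, hw, hwz⟩ := hM' hz
            rwa [← Φ.injective hwz]
          · intro z hz
            have := hinv ⟨Φ z, hz, rfl⟩
            rw [show fhat (Φ z) = Φ (D.F z) from hiter 1 z] at this
            exact this
        show M' = Φ '' D.M0
        rw [← key, image_preimage_eq _ Φ.surjective]
    refine ⟨M, hMG, ⟨hmin, fun hM => ?_⟩, ?_⟩
    · have hover : ∀ θ ∉ range (orb D.ρ), ∃! p : ↥M, p.1.1 = θ := by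
        intro θ hθ
        obtain ⟨z, hz, hz1⟩ := D.exists_over θ
        have hzM : Φ z ∈ M := ⟨z, subset_closure ⟨hz, by rw [hz1]; exact hθ⟩, rfl⟩
        refine ⟨⟨Φ z, hzM⟩, (hΦ1 z).trans hz1, ?_⟩
        rintro ⟨p, hp⟩ hpθ
        have hpθ : p.1 = θ := hpθ
        have := D.G_uniq (hMG hp) hz ((hsy1 _).trans (hpθ.trans hz1.symm))
          (by rw [hsy1, hpθ]; exact hθ)
        apply Subtype.ext
        show p = Φ z
        rw [← this, Φ.apply_symm_apply]
      have hproj : Continuous fun p : ↥M => p.1.1 := by fun_prop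
      have hMc : IsCompact M := hMcl.isCompact
      have hsurj : Surjective fun p : ↥M => p.1.1 := by
        have hcl : IsClosed (Prod.fst '' M) := (hMc.image continuous_fst).isClosed
        intro θ
        have : θ ∈ Prod.fst '' M := by
          refine closure_minimal ?_ hcl (orb_compl_dense D.ρ θ)
          intro θ' hθ'
          obtain ⟨p, hp, -⟩ := hover θ' hθ'
          exact ⟨p.1, p.2, hp⟩
        obtain ⟨p, hp, hpθ⟩ := this
        exact ⟨⟨p, hp⟩, hpθ⟩
      have hrot : ∀ (n : ℤ) (y : T1),
          zIter (Homeomorph.addRight (D.ρ : T1)).toEquiv n y = y + n • (D.ρ : T1) := by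
        intro n y
        show ((Equiv.addRight (D.ρ : T1)) ^ n) y = _
        simp
      refine ⟨{ Y := T1, g := Homeomorph.addRight (D.ρ : T1), hmap := fun p => p.1.1,
                factor := ⟨hproj, hsurj, ?_⟩, a11 := ?_, ap := ?_ }⟩
      · funext p
        show (Φ (D.F (Φ.symm p.1))).1 = p.1.1 + (D.ρ : T1)
        rw [hΦ1, F_fst, hsy1]
      · exact (orb_compl_dense D.ρ).mono fun θ hθ => hover θ hθ
      · intro ε hε
        refine ⟨ε, hε, fun y y' hy n => ?_⟩
        rw [hrot, hrot, dist_add_right]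
        exact hy
    · rintro ⟨-, hap⟩
      have hmaps : MapsTo fhat M M := fun p hp => hmin.2.2.1.le ⟨p, hp, rfl⟩
      have hap := hap hmaps
      obtain ⟨z1, hz1M, hz1, hs1⟩ := D.exists_pos
      obtain ⟨z2, hz2M, hz2, hs2⟩ := D.exists_neg
      have hne : Φ z1 ≠ Φ z2 := by
        intro he
        have := Φ.injective he
        rw [this] at hs1
        linarith
      obtain ⟨δ, hδ, hap⟩ := hap (dist (Φ z1) (Φ z2)) (dist_pos.2 hne)
      have htend : Filter.Tendsto (fun m : ℕ => 2 * D.a (-(m : ℤ))) Filter.atTop (nhds 0) := by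
        have h1 : Summable fun m : ℕ => D.a (-(m : ℤ)) :=
          D.has.comp_injective (i := fun m : ℕ => -(m : ℤ)) (fun a b hab => by simpa using hab)
        simpa using h1.tendsto_atTop_zero.const_mul 2
      obtain ⟨m, hm⟩ := (htend.eventually (gt_mem_nhds hδ)).exists
      obtain ⟨w1, hw1, hw1z⟩ := D.F_iter_M0 m hz1M
      obtain ⟨w2, hw2, hw2z⟩ := D.F_iter_M0 m hz2M
      have hb : ∀ w : ↥D.Z, (D.F^[m] w).1.1 = 0 → w.1.1 = orb D.ρ (-(m : ℤ)) := by
        intro w hw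
        rw [F_iter_fst] at hw
        exact add_right_cancel (hw.trans (orb_neg D.ρ m).symm)
      have hb1 := hb w1 (by rw [hw1z]; exact hz1)
      have hb2 := hb w2 (by rw [hw2z]; exact hz2)
      have hbb : w1.1.1 = w2.1.1 := hb1.trans hb2.symm
      have hy1 : w1.1.2.1 = D.γ w1.1.1 := D.M0_G hw1
      have hy2 : w2.1.2.1 = D.γ w2.1.1 := D.M0_G hw2
      have hyy : w1.1.2.1 = w2.1.2.1 := by rw [hy1, hy2, hbb]
      have hPd := D.P_eq_of_same w1.2 w2.2 hbb hyy hb1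
      have hd : dist (Φ w1) (Φ w2) < δ := by
        rw [Prod.dist_eq, hΦ1, hΦ1, hbb, dist_self]
        refine max_lt hδ (lt_of_le_of_lt (hΦd w1 w2 hbb) (lt_of_le_of_lt ?_ hm))
        have ha := D.ha (-(m : ℤ))
        have u1 := (w1.1.2.2 (-(m : ℤ))).2
        have u2 := (w2.1.2.2 (-(m : ℤ))).2
        rw [abs_sub_comm, hPd, abs_mul, abs_of_pos ha, mul_comm]
        refine mul_le_mul_of_nonneg_right ?_ ha.le
        rw [abs_le]
        constructor <;> linarith [u1.1, u1.2, u2.1, u2.2]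
      have := hap ⟨Φ w1, w1, hw1, rfl⟩ ⟨Φ w2, w2, hw2, rfl⟩ hd m
      unfold restrictMap at this
      rw [MapsTo.iterate_restrict, Subtype.dist_eq, MapsTo.val_restrict_apply,
        MapsTo.val_restrict_apply, hiter, hiter, hw1z, hw2z] at this
      exact lt_irrefl _ this

end BData

/-- the blow-up construction for quasiperiodically forced increasing
interval maps. -/
theorem stmt1 {I : Set ℝ} (hIcomp : IsCompact I) (hIconn : I.OrdConnected)
    (ρ : ℝ) (hρ : Irrational ρ)
    (f : T1 × ↥I → T1 × ↥I) (hf : ForcedIncreasing (fun θ : T1 => θ + (ρ : T1)) f)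
    (γ : T1 → ↥I) (hγc : Continuous γ) (hγint : ∀ θ : T1, (γ θ : ℝ) ∈ interior I)
    (hγinv : ∀ θ : T1, f (θ, γ θ) = (θ + (ρ : T1), γ (θ + (ρ : T1)))) :
    ∃ fhat h : T1 × ↥I → T1 × ↥I,
      BlowUpConclusion (fun θ : T1 => θ + (ρ : T1)) f γ fhat h ∧
      Pinched (h ⁻¹' curveGraph γ) ∧
      ∃ M : Set (T1 × ↥I), M ⊆ h ⁻¹' curveGraph γ ∧
        IsAAMinimal fhat M ∧ ¬ IsAPMinimal fhat M := by
  classical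
  have hne : I.Nonempty := ⟨_, (γ 0).2⟩
  have : CompactSpace ↥I := isCompact_iff_compactSpace.1 hIcomp
  have : PreconnectedSpace ↥I := Subtype.preconnectedSpace hIconn.isPreconnected
  obtain ⟨A, hA⟩ := hIcomp.exists_isLeast hne
  obtain ⟨B, hB⟩ := hIcomp.exists_isGreatest hne
  have hAB_int : ∀ θ, A < γ θ ∧ (γ θ : ℝ) < B := by
    intro θ
    have hsub : interior I ⊆ interior (Icc A B) :=
      interior_mono fun x hx => ⟨hA.2 hx, hB.2 hx⟩
    have := hsub (hγint θ)
    rw [interior_Icc] at this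
    exact this
  obtain ⟨V, hV, hVf⟩ := exists_V hf hγc hγinv (A := ⟨A, hA.1⟩) (B := ⟨B, hB.1⟩)
    (fun x => hA.2 x.2) (fun x => hB.2 x.2)
  obtain ⟨a, ha, c, hc, -⟩ := posSumOfEncodable (one_pos : (0 : ℝ) < 1) ℤ
  exact BData.main
    { ρ := ρ, hρ := hρ, f := f, hf := hf, γ := γ, hγc := hγc, hγinv := hγinv,
      A := ⟨A, hA.1⟩, B := ⟨B, hB.1⟩, hA := fun x => hA.2 x.2, hB := fun x => hB.2 x.2,
      hAγ := fun θ => (hAB_int θ).1, hγB := fun θ => (hAB_int θ).2,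
      V := V, hV := hV, hVf := hVf, a := a, ha := ha, has := hc.summable } hIconn

end
end
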